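/- arXiv:math-ph/0010019 — 4 statements merged into one kernel-verified Lean document; each statement's English description precedes it below -/
import Mathlib

section
/- (Lemma 4.4) Fix an integer d ≥ 1, m > 0 and x, y ∈ ℝ^d with x ≠ y. The family of finite measures {V'_{x,y,a} : 0 < a < 1, x − y ∈ aℤ^d} on Ω(x,y) is tight: for every η > 0 there exists a compact set K ⊆ Ω(x,y) such that V'_{x,y,a}(Ω(x,y) ∖ K) < η for all 0 < a < 1 with x − y ∈ aℤ^d. -/
open MeasureTheory Filter Topology Real Set
open scoped RealInnerProductSpace ENNReal unitInterval

noncomputable section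

/-- `ℝ^d` as a Euclidean space. -/
abbrev Ed (d : ℕ) := EuclideanSpace ℝ (Fin d)

/-- The space of continuous paths `[0,1] → ℝ^d`, with the uniform metric. -/
abbrev PathSp (d : ℕ) := C(unitInterval, Ed d)

instance (d : ℕ) : MeasurableSpace (PathSp d) := borel _
instance (d : ℕ) : BorelSpace (PathSp d) := ⟨rfl⟩

/-- Evaluation of a path at a real time, clamped to `[0,1]`. -/
def evalAt {d : ℕ} (ω : PathSp d) (t : ℝ) : Ed d := ω (Set.projIcc 0 1 zero_le_one t)

/-- `Ω(x)`: continuous paths starting at `x`. -/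
abbrev Omega1 {d : ℕ} (x : Ed d) := {ω : PathSp d // ω 0 = x}

/-- `Ω(x,y)`: continuous paths from `x` to `y`. -/
abbrev Omega2 {d : ℕ} (x y : Ed d) := {ω : PathSp d // ω 0 = x ∧ ω 1 = y}

/-- clamp a real number to `[0,1]`. -/
def clamp01 (r : ℝ) : ℝ := min 1 (max 0 r)

lemma clamp01_of_nonpos {r : ℝ} (h : r ≤ 0) : clamp01 r = 0 := by
  rw [clamp01, max_eq_left h, min_eq_right zero_le_one]

lemma clamp01_of_one_le {r : ℝ} (h : 1 ≤ r) : clamp01 r = 1 := by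
  rw [clamp01, max_eq_right (zero_le_one.trans h), min_eq_left h]

lemma clamp01_continuous : Continuous clamp01 :=
  continuous_const.min (continuous_const.max continuous_id)

/-- The piecewise linear path starting at `x` with `N` steps given by the increments `v i`,
the `i`-th step being linearly parametrized by `[i/N, (i+1)/N]`. -/
def pwLinE {d : ℕ} (x : Ed d) (N : ℕ) (v : Fin N → Ed d) : PathSp d :=
  ⟨fun t => x + ∑ i : Fin N, clamp01 ((N : ℝ) * (t : ℝ) - ((i : ℕ) : ℝ)) • v i, by
    refine continuous_const.add (continuous_finset_sum _ fun i _ => ?_)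
    exact ((clamp01_continuous.comp
      ((continuous_const.mul continuous_subtype_val).sub continuous_const)).smul
      continuous_const)⟩

lemma pwLinE_zero {d : ℕ} (x : Ed d) (N : ℕ) (v : Fin N → Ed d) :
    pwLinE x N v 0 = x := by
  show x + ∑ i : Fin N, clamp01 ((N : ℝ) * ((0 : unitInterval) : ℝ) - ((i : ℕ) : ℝ)) • v i = x
  have h : ∀ i : Fin N, clamp01 ((N : ℝ) * ((0 : unitInterval) : ℝ) - ((i : ℕ) : ℝ)) = 0 := by
    intro i
    apply clamp01_of_nonpos
    have h0 : ((0 : unitInterval) : ℝ) = 0 := rfl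
    rw [h0, mul_zero, zero_sub]
    exact neg_nonpos.mpr (Nat.cast_nonneg (i : ℕ))
  simp only [h, zero_smul, Finset.sum_const_zero, add_zero]

lemma pwLinE_one {d : ℕ} (x : Ed d) (N : ℕ) (v : Fin N → Ed d) :
    pwLinE x N v 1 = x + ∑ i : Fin N, v i := by
  show x + ∑ i : Fin N, clamp01 ((N : ℝ) * ((1 : unitInterval) : ℝ) - ((i : ℕ) : ℝ)) • v i
      = x + ∑ i : Fin N, v i
  have h : ∀ i : Fin N, clamp01 ((N : ℝ) * ((1 : unitInterval) : ℝ) - ((i : ℕ) : ℝ)) = 1 := by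
    intro i
    apply clamp01_of_one_le
    have h1 : ((1 : unitInterval) : ℝ) = 1 := rfl
    have h2 : ((i : ℕ) : ℝ) + 1 ≤ (N : ℝ) := by
      exact_mod_cast Nat.succ_le_of_lt i.isLt
    rw [h1, mul_one]; linarith
  simp only [h, one_smul]

/-- Piecewise linear element of `Ω(x)` with increments `v`. -/
def pwLin1 {d : ℕ} (x : Ed d) (N : ℕ) (v : Fin N → Ed d) : Omega1 x :=
  ⟨pwLinE x N v, pwLinE_zero x N v⟩

/-- Piecewise linear element of `Ω(x,y)` with increments `v` summing to `y - x`. -/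
def pwLin2 {d : ℕ} (x y : Ed d) (N : ℕ) (v : Fin N → Ed d)
    (h : x + ∑ i : Fin N, v i = y) : Omega2 x y :=
  ⟨pwLinE x N v, pwLinE_zero x N v, by rw [pwLinE_one, h]⟩

/-- the point preceding `x_i` in the list `x, x_1, …, x_N`. -/
def prevPt {d : ℕ} (x : Ed d) {N : ℕ} (xs : Fin N → Ed d) (i : Fin N) : Ed d :=
  if (i : ℕ) = 0 then x else xs ⟨(i : ℕ) - 1, lt_of_le_of_lt (Nat.pred_le _) i.isLt⟩

/-- The discrete measure `W_{x,a,N}`, i.e. the measure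
`∏_{i=1}^N (2πa²)^{-d/2} exp(-|x_i - x_{i-1}|²/(2a²)) dx_1 … dx_N` (with `x_0 = x`)
on `N`-step piecewise linear paths, placed on `{a²N} × Ω(x) ⊆ ℝ × Ω(x)`.
For `N = 0` this is the Dirac measure at `(0, constant path at x)`. -/
def WxaN {d : ℕ} (x : Ed d) (a : ℝ) (N : ℕ) : Measure (ℝ × Omega1 x) :=
  Measure.map
    (fun xs : Fin N → Ed d =>
      ((a ^ 2 * N : ℝ), pwLin1 x N fun i => xs i - prevPt x xs i))
    (volume.withDensity fun xs : Fin N → Ed d =>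
      ENNReal.ofReal (∏ i : Fin N,
        (2 * π * a ^ 2) ^ (-(d : ℝ) / 2) *
          Real.exp (-‖xs i - prevPt x xs i‖ ^ 2 / (2 * a ^ 2))))

/-- The approximating probability measure
`W_{x,a} = (1 - e^{-m²a²/2}) Σ_{N=0}^∞ e^{-m²a²N/2} W_{x,a,N}`. -/
def Wxa {d : ℕ} (x : Ed d) (m a : ℝ) : Measure (ℝ × Omega1 x) :=
  ENNReal.ofReal (1 - Real.exp (-m ^ 2 * a ^ 2 / 2)) •
    Measure.sum fun N : ℕ =>
      ENNReal.ofReal (Real.exp (-m ^ 2 * a ^ 2 * N / 2)) • WxaN x a N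

/-- The lattice step of length `a` in direction `p.1`, forwards or backwards
according to `p.2`. -/
def stepVec {d : ℕ} (a : ℝ) (p : Fin d × Bool) : Ed d :=
  (if p.2 then a else -a) • EuclideanSpace.single p.1 (1 : ℝ)

/-- The normalized counting measure `V'_{x,a,N}` giving mass `(2d)^{-N}` to each
(piecewise linearly parametrized) `N`-step nearest-neighbour lattice path in `x + aℤ^d`
starting at `x`.  For `N = 0` it is the Dirac measure at the constant path. -/
def VxaN {d : ℕ} (x : Ed d) (a : ℝ) (N : ℕ) : Measure (Omega1 x) :=
  Measure.sum fun s : Fin N → Fin d × Bool =>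
    (((2 * d : ℕ) : ℝ≥0∞) ^ N)⁻¹ •
      Measure.dirac (pwLin1 x N fun i => stepVec a (s i))

/-- The approximating probability measure
`V'_{x,a} = (1 - e^{-m²a²/(2d)}) Σ_{N=0}^∞ e^{-m²a²N/(2d)} V'_{x,a,N}`. -/
def Vxa {d : ℕ} (x : Ed d) (m a : ℝ) : Measure (Omega1 x) :=
  ENNReal.ofReal (1 - Real.exp (-m ^ 2 * a ^ 2 / (2 * d))) •
    Measure.sum fun N : ℕ =>
      ENNReal.ofReal (Real.exp (-m ^ 2 * a ^ 2 * N / (2 * d))) • VxaN x a N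

/-- `Wt` is the family of Wiener measures `(W_x^t)_{t>0}` on `Ω(x)`:
each `W_x^t` is a Borel probability measure, characterized by the characteristic
functions of its finite dimensional distributions
`∫ exp(i Σ_j ξ_j·ω(t_j)) dW_x^t = exp(-(t/2) Σ_j (t_j - t_{j-1}) |ξ_j + ⋯ + ξ_n|²
+ i x·(ξ_1 + ⋯ + ξ_n))` for all `0 = t_0 < t_1 < ⋯ < t_n ≤ 1`. -/
def IsWienerFamily {d : ℕ} (x : Ed d) (Wt : ℝ → Measure (Omega1 x)) : Prop :=
  ∀ t : ℝ, 0 < t → (IsProbabilityMeasure (Wt t) ∧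
    ∀ (n : ℕ) (ts : ℕ → ℝ), ts 0 = 0 → (∀ i < n, ts i < ts (i + 1)) → ts n ≤ 1 →
      ∀ ξ : Fin n → Ed d,
        (∫ ω : Omega1 x, Complex.exp (Complex.I *
            ((∑ i : Fin n, ⟪ξ i, evalAt ω.1 (ts ((i : ℕ) + 1))⟫ : ℝ) : ℂ)) ∂(Wt t))
          = Complex.exp
              (((-(t / 2) * ∑ i : Fin n,
                  (ts ((i : ℕ) + 1) - ts (i : ℕ)) * ‖∑ j ∈ Finset.Ici i, ξ j‖ ^ 2 : ℝ) : ℂ)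
                + Complex.I * ((⟪∑ j, ξ j, x⟫ : ℝ) : ℂ)))


/-- the sequence of points `x, vs 0, …, vs (N-1), y` (with value `y` from index `N+1` on). -/
def pinPts {d : ℕ} (x y : Ed d) {N : ℕ} (vs : Fin N → Ed d) (j : ℕ) : Ed d :=
  if h0 : j = 0 then x else if h : j ≤ N then vs ⟨j - 1, by omega⟩ else y

lemma pinPts_zero {d : ℕ} (x y : Ed d) {N : ℕ} (vs : Fin N → Ed d) :
    pinPts x y vs 0 = x := by simp [pinPts]

lemma pinPts_last {d : ℕ} (x y : Ed d) {N : ℕ} (vs : Fin N → Ed d) :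
    pinPts x y vs (N + 1) = y := by
  have h1 : ¬(N + 1 = 0) := Nat.succ_ne_zero N
  have h2 : ¬(N + 1 ≤ N) := by omega
  simp [pinPts, h1, h2]

lemma pin_telescope {d : ℕ} (x y : Ed d) {N : ℕ} (vs : Fin N → Ed d) :
    x + ∑ i : Fin (N + 1), (pinPts x y vs ((i : ℕ) + 1) - pinPts x y vs (i : ℕ)) = y := by
  rw [Fin.sum_univ_eq_sum_range (fun j => pinPts x y vs (j + 1) - pinPts x y vs j) (N + 1)]
  rw [Finset.sum_range_sub (fun j => pinPts x y vs j) (N + 1)]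
  rw [pinPts_zero, pinPts_last]
  abel

/-- The discrete measure `W_{x,y,a,N+1}`, i.e. the measure
`∏_{i=1}^{N+1} (2πa²)^{-d/2} exp(-|x_i - x_{i-1}|²/(2a²)) dx_1 … dx_N`
(with `x_0 = x`, `x_{N+1} = y`) on `(N+1)`-step piecewise linear paths from `x` to `y`,
placed on `{a²(N+1)} × Ω(x,y) ⊆ ℝ × Ω(x,y)`.  For `N = 0` this is the point mass of
weight `(2πa²)^{-d/2} e^{-|x-y|²/(2a²)}` at `(a², linear path from x to y)`. -/
def WxyaN {d : ℕ} (x y : Ed d) (a : ℝ) (N : ℕ) : Measure (ℝ × Omega2 x y) :=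
  Measure.map
    (fun vs : Fin N → Ed d =>
      ((a ^ 2 * (N + 1) : ℝ),
        pwLin2 x y (N + 1) (fun i => pinPts x y vs ((i : ℕ) + 1) - pinPts x y vs (i : ℕ))
          (pin_telescope x y vs)))
    (volume.withDensity fun vs : Fin N → Ed d =>
      ENNReal.ofReal (∏ i : Fin (N + 1),
        (2 * π * a ^ 2) ^ (-(d : ℝ) / 2) *
          Real.exp (-‖pinPts x y vs ((i : ℕ) + 1) - pinPts x y vs (i : ℕ)‖ ^ 2 /
            (2 * a ^ 2))))

/-- The approximating measure
`W_{x,y,a} = (1 - e^{-m²a²/2}) Σ_{N=1}^∞ e^{-m²a²N/2} W_{x,y,a,N}`. -/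
def Wxya {d : ℕ} (x y : Ed d) (m a : ℝ) : Measure (ℝ × Omega2 x y) :=
  ENNReal.ofReal (1 - Real.exp (-m ^ 2 * a ^ 2 / 2)) •
    Measure.sum fun N : ℕ =>
      ENNReal.ofReal (Real.exp (-m ^ 2 * a ^ 2 * (N + 1) / 2)) • WxyaN x y a N

/-- The measure `V'_{x,y,a,N}` giving mass `a^{-d} (2d)^{-N}` to each
(piecewise linearly parametrized) `N`-step nearest-neighbour lattice path
in `x + aℤ^d` from `x` to `y`. -/
def VxyaN {d : ℕ} (x y : Ed d) (a : ℝ) (N : ℕ) : Measure (Omega2 x y) :=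
  Measure.sum fun s : {s : Fin N → Fin d × Bool // x + ∑ i, stepVec a (s i) = y} =>
    (ENNReal.ofReal (a ^ (-(d : ℝ))) * (((2 * d : ℕ) : ℝ≥0∞) ^ N)⁻¹) •
      Measure.dirac (pwLin2 x y N (fun i => stepVec a (s.1 i)) s.2)

/-- The approximating measure
`V'_{x,y,a} = (1 - e^{-m²a²/(2d)}) Σ_{N=1}^∞ e^{-m²a²N/(2d)} V'_{x,y,a,N}`. -/
def Vxya {d : ℕ} (x y : Ed d) (m a : ℝ) : Measure (Omega2 x y) :=
  ENNReal.ofReal (1 - Real.exp (-m ^ 2 * a ^ 2 / (2 * d))) •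
    Measure.sum fun N : ℕ =>
      ENNReal.ofReal (Real.exp (-m ^ 2 * a ^ 2 * (N + 1) / (2 * d))) • VxyaN x y a (N + 1)

/-- `Wt` is the family of pinned Wiener measures `(W_{x,y}^t)_{t>0}` on `Ω(x,y)`:
finite Borel measures characterized by the characteristic functions of their finite
dimensional distributions: for `0 = t_0 < t_1 < ⋯ < t_n < 1`, with `η_i = ξ_i + ⋯ + ξ_n`,
`∫ exp(i Σ_j ξ_j·ω(t_j)) dW_{x,y}^t = (2πt)^{-d/2} e^{-|x-y|²/(2t)} ·
exp(-(t/2)(Σ_j (t_j - t_{j-1})|η_j|² - |Σ_j t_j ξ_j|²) + i Σ_j ((1-t_j)x + t_j y)·ξ_j)`;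
in particular (`n = 0`) the total mass is the heat kernel `(2πt)^{-d/2} e^{-|x-y|²/(2t)}`. -/
def IsPinnedWienerFamily {d : ℕ} (x y : Ed d) (Wt : ℝ → Measure (Omega2 x y)) : Prop :=
  ∀ t : ℝ, 0 < t → (IsFiniteMeasure (Wt t) ∧
    ∀ (n : ℕ) (ts : ℕ → ℝ), ts 0 = 0 → (∀ i < n, ts i < ts (i + 1)) → ts n < 1 →
      ∀ ξ : Fin n → Ed d,
        (∫ ω : Omega2 x y, Complex.exp (Complex.I *
            ((∑ i : Fin n, ⟪ξ i, evalAt ω.1 (ts ((i : ℕ) + 1))⟫ : ℝ) : ℂ)) ∂(Wt t))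
          = (((2 * π * t) ^ (-(d : ℝ) / 2) * Real.exp (-‖x - y‖ ^ 2 / (2 * t)) : ℝ) : ℂ) *
            Complex.exp
              (((-(t / 2) *
                  ((∑ i : Fin n,
                      (ts ((i : ℕ) + 1) - ts (i : ℕ)) * ‖∑ j ∈ Finset.Ici i, ξ j‖ ^ 2)
                    - ‖∑ i : Fin n, ts ((i : ℕ) + 1) • ξ i‖ ^ 2) : ℝ) : ℂ)
                + Complex.I *
                  ((∑ i : Fin n,
                    ⟪ξ i, (1 - ts ((i : ℕ) + 1)) • x + ts ((i : ℕ) + 1) • y⟫ : ℝ) : ℂ)))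

/-!
The relevant time scale of an `N`-step path is `τ² = a²N`. Choosing the axes of the steps
first and the signs afterwards, the number of `N`-step lattice walks with a prescribed displacement
is at most `(2d)^N (d/(N+1))^(d/2)`, so `V'_{x,y,a,N}` has mass at most `(√d/τ)^d`: large `τ`
contributes little. For the increment over a time window `[u,v]` of length at most `1/2`, the steps
inside the window are freed from the endpoint constraint, at the price of the uniform bound for the
steps outside it, and a Chernoff bound gives
`V'_{x,y,a,N}(|ω(v) - ω(u)| > ε) ≤ C τ^(d+2) (v-u)^(d+1) / ε^(2(d+1))`.
For `τ` bounded this is the hypothesis of Kolmogorov's criterion, proved by chaining over dyadic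
times.
-/

lemma two_mul_add_one_mul_centralBinom_sq_le (n : ℕ) :
    (2 * n + 1) * n.centralBinom ^ 2 ≤ 16 ^ n := by
  induction n with
  | zero => simp
  | succ n ih =>
    have hrec := Nat.succ_mul_centralBinom_succ n
    refine le_of_mul_le_mul_left ?_ (by positivity : 0 < (n + 1) ^ 2)
    calc (n + 1) ^ 2 * ((2 * (n + 1) + 1) * (n + 1).centralBinom ^ 2)
        = (2 * n + 3) * ((n + 1) * (n + 1).centralBinom) ^ 2 := by ring
      _ = 4 * ((2 * n + 1) * (2 * n + 3)) * ((2 * n + 1) * n.centralBinom ^ 2) := by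
          rw [hrec]; ring
      _ ≤ 4 * (4 * (n + 1) ^ 2) * 16 ^ n :=
          Nat.mul_le_mul (Nat.mul_le_mul_left 4 (by linarith)) ih
      _ = (n + 1) ^ 2 * 16 ^ (n + 1) := by ring

lemma succ_mul_choose_sq_le (n k : ℕ) : (n + 1) * n.choose k ^ 2 ≤ 4 ^ n := by
  refine (Nat.mul_le_mul_left _ (Nat.pow_le_pow_left (Nat.choose_le_middle k n) 2)).trans ?_
  obtain ⟨m, rfl | rfl⟩ := n.even_or_odd'
  · rw [Nat.mul_div_cancel_left m two_pos, pow_mul, ← Nat.centralBinom_eq_two_mul_choose]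
    exact two_mul_add_one_mul_centralBinom_sq_le m
  · have hhalf : (m + 1).centralBinom = 2 * (2 * m + 1).choose m := by
      rw [Nat.centralBinom_eq_two_mul_choose, mul_add_one, Nat.choose_succ_succ,
        Nat.choose_symm_half, ← two_mul]
    have hcentral := two_mul_add_one_mul_centralBinom_sq_le (m + 1)
    rw [hhalf] at hcentral
    have hdiv : (2 * m + 1) / 2 = m := by omega
    have hpow : 4 * 4 ^ (2 * m + 1) = 16 ^ (m + 1) := by
      rw [← pow_succ', show (16 : ℕ) = 4 ^ 2 by norm_num, ← pow_mul]; ring_nf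
    rw [hdiv]
    nlinarith

section LatticeWalks

variable {ι κ : Type*} [Fintype ι]

/-- The sign `±1` encoded by a Boolean, with `true` for `+1`. -/
def boolSign (b : Bool) : ℤ := if b then 1 else -1

lemma sum_boolSign (ε : ι → Bool) :
    ∑ i, boolSign (ε i) = 2 * (Finset.univ.filter fun i => ε i = true).card - Fintype.card ι := by
  have hsign : ∀ b : Bool, boolSign b = 2 * (if b = true then 1 else 0) - 1 := by decide
  simp only [hsign, Finset.sum_sub_distrib, ← Finset.mul_sum, Finset.sum_boole]
  simp

lemma card_filter_sum_boolSign_eq_le [DecidableEq ι] (w : ℤ) :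
    ((Finset.univ.filter fun ε : ι → Bool => ∑ i, boolSign (ε i) = w).card : ℝ)
      ≤ 2 ^ Fintype.card ι * √(1 / (Fintype.card ι + 1)) := by
  set n := Fintype.card ι
  set k := ((n + w) / 2).toNat
  have hcard : (Finset.univ.filter fun ε : ι → Bool => ∑ i, boolSign (ε i) = w).card
      ≤ n.choose k := by
    rw [show n = (Finset.univ : Finset ι).card from rfl, ← Finset.card_powersetCard]
    refine Finset.card_le_card_of_injOn (fun ε => Finset.univ.filter fun i => ε i = true) ?_ ?_
    · intro ε hε
      have hw : 2 * (Finset.univ.filter fun i => ε i = true).card - (n : ℤ) = w := by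
        rw [← sum_boolSign]
        simpa using hε
      refine Finset.mem_coe.2 (Finset.mem_powersetCard.2 ⟨Finset.subset_univ _, ?_⟩)
      change (Finset.univ.filter fun i => ε i = true).card = ((n + w) / 2).toNat
      omega
    · intro ε _ ε' _ h
      funext i
      simpa [Bool.coe_iff_coe] using Finset.ext_iff.1 h i
  have hchoose : ((n : ℝ) + 1) * (n.choose k : ℝ) ^ 2 ≤ (2 ^ n) ^ 2 := by
    rw [← pow_mul, mul_comm n 2, pow_mul]
    exact_mod_cast succ_mul_choose_sq_le n k
  calc _ ≤ (n.choose k : ℝ) := by exact_mod_cast hcard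
    _ ≤ √((2 ^ n) ^ 2 * (1 / (n + 1))) := by
        refine Real.le_sqrt_of_sq_le ?_
        rw [mul_one_div, le_div_iff₀ (by positivity)]
        linarith
    _ = 2 ^ n * √(1 / (n + 1)) := by
        rw [Real.sqrt_mul (by positivity), Real.sqrt_sq (by positivity)]

variable [DecidableEq κ]

/-- The number of times the function `k` takes the value `l`. -/
def visits (k : ι → κ) (l : κ) : ℕ := Fintype.card {i // k i = l}

lemma visits_eq_sum (k : ι → κ) (l : κ) : visits k l = ∑ i, if k i = l then 1 else 0 := by
  rw [visits, Fintype.card_subtype, Finset.card_filter]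

lemma sum_visits [Fintype κ] (k : ι → κ) : ∑ l, visits k l = Fintype.card ι := by
  simp only [visits_eq_sum]
  rw [Finset.sum_comm]
  simp

lemma visits_comp_equiv {ι' : Type*} [Fintype ι'] (e : ι' ≃ ι) (k : ι → κ) (l : κ) :
    visits (k ∘ e) l = visits k l :=
  Fintype.card_congr (e.subtypeEquiv fun _ => Iff.rfl)

lemma visits_insertNth {n : ℕ} (i : Fin (n + 1)) (l l' : κ) (k : Fin n → κ) :
    visits (i.insertNth l k : Fin (n + 1) → κ) l' = (if l = l' then 1 else 0) + visits k l' := by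
  simp only [visits_eq_sum, Fin.sum_univ_succAbove _ i, Fin.insertNth_apply_same,
    Fin.insertNth_apply_succAbove]

-- Removing one of the `visits k l` occurrences of `l` from `k` absorbs the denominator.
lemma sum_div_visits_add_one_le [Fintype κ] {n : ℕ} (l : κ) {G : (κ → ℕ) → ℝ}
    (hG0 : ∀ c, 0 ≤ G c) (hG : ∀ c c' : κ → ℕ, (∀ l' ≠ l, c l' = c' l') → G c = G c') :
    (n + 1) * ∑ k : Fin n → κ, G (visits k) / (visits k l + 1)
      ≤ ∑ k : Fin (n + 1) → κ, G (visits k) := by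
  have hinsert : ∀ i : Fin (n + 1), ∑ k : Fin n → κ, G (visits k) / (visits k l + 1)
      = ∑ k : Fin (n + 1) → κ, if k i = l then G (visits k) / visits k l else 0 := by
    intro i
    rw [← (Fin.insertNthEquiv (fun _ => κ) i).sum_comp, Fintype.sum_prod_type]
    change _ = ∑ l', ∑ k : Fin n → κ, if (i.insertNth l' k : Fin (n + 1) → κ) i = l then
      G (visits (i.insertNth l' k)) / visits (i.insertNth l' k) l else 0
    simp only [Fin.insertNth_apply_same]
    rw [Finset.sum_eq_single l (fun l' _ hl' => by simp [hl']) (by simp)]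
    refine Finset.sum_congr rfl fun k _ => ?_
    rw [if_pos rfl, visits_insertNth, if_pos rfl, hG (visits k) (visits (i.insertNth l k))
      fun l' hl' => by rw [visits_insertNth, if_neg hl'.symm, zero_add]]
    push_cast
    ring
  calc (n + 1) * ∑ k : Fin n → κ, G (visits k) / (visits k l + 1)
      = ∑ i : Fin (n + 1), ∑ k : Fin (n + 1) → κ,
          if k i = l then G (visits k) / visits k l else 0 := by
        simp only [← hinsert, Finset.sum_const, Finset.card_univ, Fintype.card_fin,
          nsmul_eq_mul]
        push_cast
        rfl
    _ = ∑ k : Fin (n + 1) → κ, visits k l * (G (visits k) / visits k l) := by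
        rw [Finset.sum_comm]
        refine Finset.sum_congr rfl fun k _ => ?_
        rw [visits_eq_sum, Nat.cast_sum, Finset.sum_mul]
        refine Finset.sum_congr rfl fun i _ => ?_
        split_ifs <;> simp
    _ ≤ ∑ k : Fin (n + 1) → κ, G (visits k) :=
        Finset.sum_le_sum fun k _ => by
          obtain h0 | h0 := eq_or_ne (visits k l : ℝ) 0
          · simpa [h0] using hG0 _
          · exact (mul_div_cancel₀ _ h0).le

lemma sum_prod_one_div_visits_add_one_le [Fintype κ] (T : Finset κ) (n : ℕ) :
    ∑ k : Fin n → κ, ∏ l ∈ T, (1 : ℝ) / (visits k l + 1)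
      ≤ Fintype.card κ ^ (n + T.card) / (n + 1) ^ T.card := by
  induction T using Finset.induction_on generalizing n with
  | empty => simp
  | insert l T hl ih =>
    have hremove := sum_div_visits_add_one_le (n := n) l
      (G := fun c : κ → ℕ => ∏ l ∈ T, (1 : ℝ) / (c l + 1))
      (fun c => Finset.prod_nonneg fun _ _ => by positivity)
      (fun c c' h => Finset.prod_congr rfl fun l' hl' => by
        rw [h l' (ne_of_mem_of_not_mem hl' hl)])
    rw [Finset.card_insert_of_notMem hl]
    simp only [Finset.prod_insert hl, one_div_mul_eq_div]
    rw [le_div_iff₀ (by positivity)]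
    calc (∑ k : Fin n → κ, (∏ l ∈ T, (1 : ℝ) / (visits k l + 1)) / (visits k l + 1))
          * (n + 1) ^ (T.card + 1)
        = (n + 1) * (∑ k : Fin n → κ,
          (∏ l ∈ T, (1 : ℝ) / (visits k l + 1)) / (visits k l + 1)) * (n + 1) ^ T.card := by ring
      _ ≤ Fintype.card κ ^ (n + 1 + T.card) / ((n + 1 : ℕ) + 1) ^ T.card * (n + 1) ^ T.card := by
          gcongr
          exact hremove.trans (ih (n + 1))
      _ ≤ Fintype.card κ ^ (n + 1 + T.card) / (n + 1) ^ T.card * (n + 1) ^ T.card := by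
          gcongr
          exact le_self_add
      _ = Fintype.card κ ^ (n + (T.card + 1)) := by
          rw [div_mul_cancel₀ _ (by positivity)]
          ring

lemma sum_prod_sqrt_visits_le [Fintype κ] [DecidableEq ι] :
    ∑ k : ι → κ, ∏ l, √(1 / (visits k l + 1)) ≤ Fintype.card κ ^ Fintype.card ι *
      √(Fintype.card κ / (Fintype.card ι + 1)) ^ Fintype.card κ := by
  set d := Fintype.card κ
  set n := Fintype.card ι
  refine le_of_sq_le_sq ?_ (by positivity)
  calc (∑ k : ι → κ, ∏ l, √(1 / (visits k l + 1))) ^ 2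
      ≤ d ^ n * ∑ k : ι → κ, (∏ l, √(1 / (visits k l + 1))) ^ 2 := by
        simpa using sq_sum_le_card_mul_sum_sq (s := Finset.univ)
          (f := fun k : ι → κ => ∏ l, √(1 / (visits k l + 1)))
    _ = d ^ n * ∑ k : ι → κ, ∏ l, (1 : ℝ) / (visits k l + 1) := by
        refine congrArg _ (Finset.sum_congr rfl fun k _ => ?_)
        rw [← Finset.prod_pow]
        exact Finset.prod_congr rfl fun l _ => Real.sq_sqrt (by positivity)
    _ = d ^ n * ∑ k : Fin n → κ, ∏ l, (1 : ℝ) / (visits k l + 1) := by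
        refine congrArg _ (Fintype.sum_equiv ((Fintype.equivFin ι).arrowCongr (Equiv.refl κ)) _ _
          fun k => Finset.prod_congr rfl fun l _ => ?_)
        rw [← visits_comp_equiv (Fintype.equivFin ι).symm k]
        rfl
    _ ≤ d ^ n * (d ^ (n + d) / (n + 1) ^ d) := by
        gcongr
        simpa using sum_prod_one_div_visits_add_one_le (Finset.univ : Finset κ) n
    _ = (d ^ n * √(d / (n + 1)) ^ d) ^ 2 := by
        rw [mul_pow, ← pow_mul _ d 2, mul_comm d 2, pow_mul _ 2 d, Real.sq_sqrt (by positivity),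
          div_pow]
        ring

/-- The nearest-neighbour step in `ℤ^κ` along the axis `p.1`, forwards if `p.2` is `true`. -/
def latticeStep (p : κ × Bool) : κ → ℤ := Pi.single p.1 (boolSign p.2)

variable [Fintype κ] [DecidableEq ι]

variable (ι) in
/-- The nearest-neighbour walks in `ℤ^κ` with total displacement `z`, as sequences of steps
indexed by `ι`. -/
def latticeWalks (z : κ → ℤ) : Finset (ι → κ × Bool) :=
  Finset.univ.filter fun s => ∑ i, latticeStep (s i) = z

lemma mem_latticeWalks {z : κ → ℤ} {s : ι → κ × Bool} :
    s ∈ latticeWalks ι z ↔ ∑ i, latticeStep (s i) = z := by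
  simp [latticeWalks]

lemma card_latticeWalks_filter_fst_eq_le (k : ι → κ) (z : κ → ℤ) :
    (((latticeWalks ι z).filter fun s => (fun i => (s i).1) = k).card : ℝ)
      ≤ 2 ^ Fintype.card ι * ∏ l, √(1 / (visits k l + 1)) := by
  have hcard : ((latticeWalks ι z).filter fun s => (fun i => (s i).1) = k).card
      ≤ (Fintype.piFinset fun l => Finset.univ.filter
          fun ε : {i // k i = l} → Bool => ∑ i, boolSign (ε i) = z l).card := by
    refine Finset.card_le_card_of_injOn (fun s l i => (s i.1).2) ?_ ?_
    · intro s hs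
      obtain ⟨hz, rfl⟩ := Finset.mem_filter.1 hs
      refine Fintype.mem_piFinset.2 fun l => Finset.mem_filter.2 ⟨Finset.mem_univ _, ?_⟩
      rw [← mem_latticeWalks.1 hz, Finset.sum_apply]
      simp only [latticeStep, Pi.single_apply, eq_comm (a := l)]
      rw [← Finset.sum_filter]
      exact (Finset.sum_subtype (Finset.univ.filter fun i => (s i).1 = l) (by simp)
        fun i => boolSign (s i).2).symm
    · intro s hs s' hs' h
      have hk := (Finset.mem_filter.1 hs).2
      have hk' := (Finset.mem_filter.1 hs').2
      funext i
      exact Prod.ext (congrFun (hk.trans hk'.symm) i) (congrFun (congrFun h (k i)) ⟨i, rfl⟩)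
  calc _ ≤ _ := Nat.cast_le.2 hcard
    _ ≤ ∏ l, 2 ^ visits k l * √(1 / (visits k l + 1)) := by
        rw [Fintype.card_piFinset, Nat.cast_prod]
        exact Finset.prod_le_prod (fun _ _ => by positivity)
          fun l _ => card_filter_sum_boolSign_eq_le _
    _ = 2 ^ Fintype.card ι * ∏ l, √(1 / (visits k l + 1)) := by
        rw [Finset.prod_mul_distrib, Finset.prod_pow_eq_pow_sum, sum_visits]

theorem card_latticeWalks_le (z : κ → ℤ) :
    ((latticeWalks ι z).card : ℝ) ≤ (2 * Fintype.card κ) ^ Fintype.card ι *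
      √(Fintype.card κ / (Fintype.card ι + 1)) ^ Fintype.card κ := by
  rw [Finset.card_eq_sum_card_fiberwise (f := fun s i => (s i).1) (t := Finset.univ)
    (fun _ _ => Finset.mem_coe.2 (Finset.mem_univ _)), Nat.cast_sum, mul_pow, mul_assoc]
  refine (Finset.sum_le_sum fun k _ => card_latticeWalks_filter_fst_eq_le k z).trans ?_
  rw [← Finset.mul_sum]
  gcongr
  exact sum_prod_sqrt_visits_le

lemma sum_latticeWalks_restrict_le (p : ι → Prop) [DecidablePred p] (z : κ → ℤ)
    {F : ({i // ¬ p i} → κ × Bool) → ℝ} (hF : ∀ t, 0 ≤ F t) :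
    ∑ s ∈ latticeWalks ι z, F (fun i => s i) ≤ (∑ t, F t) *
      ((2 * Fintype.card κ) ^ Fintype.card {i // p i} *
        √(Fintype.card κ / (Fintype.card {i // p i} + 1)) ^ Fintype.card κ) := by
  have hfiber : ∀ t, ((latticeWalks ι z).filter fun s => (fun i : {i // ¬ p i} => s i) = t).card
      ≤ (latticeWalks {i // p i} (z - ∑ i, latticeStep (t i))).card := by
    intro t
    refine Finset.card_le_card_of_injOn (fun s i => s i) ?_ ?_
    · intro s hs
      obtain ⟨hz, rfl⟩ := Finset.mem_filter.1 hs
      rw [Finset.mem_coe, mem_latticeWalks, eq_sub_iff_add_eq, ← mem_latticeWalks.1 hz]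
      exact Fintype.sum_subtype_add_sum_subtype p fun i => latticeStep (s i)
    · intro s hs s' hs' h
      have hneg := (Finset.mem_filter.1 hs).2.trans (Finset.mem_filter.1 hs').2.symm
      funext i
      by_cases hi : p i
      · exact congrFun h ⟨i, hi⟩
      · exact congrFun hneg ⟨i, hi⟩
  rw [← Finset.sum_fiberwise (latticeWalks ι z) fun s (i : {i // ¬ p i}) => s i, Finset.sum_mul]
  refine Finset.sum_le_sum fun t _ => ?_
  rw [Finset.sum_congr rfl fun s hs => congrArg F (Finset.mem_filter.1 hs).2, Finset.sum_const,
    nsmul_eq_mul, mul_comm]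
  exact mul_le_mul_of_nonneg_left ((Nat.cast_le.2 (hfiber t)).trans (card_latticeWalks_le _)) (hF t)

lemma sum_exp_mul_latticeStep_le (c : ℝ) (j : κ) :
    ∑ p : κ × Bool, rexp (c * latticeStep p j) ≤ 2 * Fintype.card κ * rexp (c ^ 2 / 2) := by
  have hdir : ∀ l, ∑ b, rexp (c * latticeStep (l, b) j) ≤ 2 * rexp (c ^ 2 / 2) := by
    intro l
    by_cases hl : l = j
    · subst hl
      have hcosh : ∑ b, rexp (c * latticeStep (l, b) l) = 2 * Real.cosh c := by
        rw [Fintype.sum_bool, Real.cosh_eq]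
        simp only [latticeStep, boolSign, Pi.single_eq_same, if_true, Bool.false_eq_true, if_false,
          Int.cast_one, Int.cast_neg, mul_one, mul_neg]
        ring
      rw [hcosh]
      gcongr
      exact Real.cosh_le_exp_half_sq c
    · have hone : 1 ≤ rexp (c ^ 2 / 2) := Real.one_le_exp (by positivity)
      simpa [latticeStep, Ne.symm hl] using hone
  rw [Fintype.sum_prod_type]
  refine (Finset.sum_le_sum fun l _ => hdir l).trans_eq ?_
  simp only [Finset.sum_const, Finset.card_univ, nsmul_eq_mul]
  ring

lemma sum_exp_sum_mul_latticeStep_le (c : ι → ℝ) (j : κ) :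
    ∑ t : ι → κ × Bool, rexp (∑ i, c i * latticeStep (t i) j)
      ≤ (2 * Fintype.card κ) ^ Fintype.card ι * rexp ((∑ i, c i ^ 2) / 2) := by
  calc ∑ t : ι → κ × Bool, rexp (∑ i, c i * latticeStep (t i) j)
      = ∏ i, ∑ p : κ × Bool, rexp (c i * latticeStep p j) := by
        simp only [Fintype.prod_sum, Real.exp_sum]
    _ ≤ ∏ i, (2 * Fintype.card κ * rexp (c i ^ 2 / 2)) :=
        Finset.prod_le_prod (fun _ _ => Finset.sum_nonneg fun _ _ => (Real.exp_pos _).le)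
          fun i _ => sum_exp_mul_latticeStep_le (c i) j
    _ = (2 * Fintype.card κ) ^ Fintype.card ι * rexp ((∑ i, c i ^ 2) / 2) := by
        rw [Finset.prod_mul_distrib, ← Real.exp_sum, Finset.prod_const, Finset.card_univ,
          ← Finset.sum_div]

-- The steps with `c i ≠ 0` are controlled by a Chernoff bound, the remaining ones by the uniform
-- bound on the number of walks with a given displacement.
theorem sum_latticeWalks_exp_le (c : ι → ℝ) (z : κ → ℤ) (j : κ) :
    ∑ s ∈ latticeWalks ι z, rexp (∑ i, c i * latticeStep (s i) j)
      ≤ (2 * Fintype.card κ) ^ Fintype.card ι * rexp ((∑ i, c i ^ 2) / 2) *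
        √(Fintype.card κ / (Fintype.card {i // c i = 0} + 1)) ^ Fintype.card κ := by
  set d := Fintype.card κ
  set n := Fintype.card {i // c i = 0}
  have hdrop : ∀ f : ι → ℝ, (∀ i, c i = 0 → f i = 0) →
      ∑ i, f i = ∑ i : {i // ¬ c i = 0}, f i := by
    intro f hf
    rw [← Fintype.sum_subtype_add_sum_subtype (fun i => c i = 0) f,
      Finset.sum_eq_zero fun i _ => hf i.1 i.2, zero_add]
  have hcard : n + Fintype.card {i // ¬ c i = 0} = Fintype.card ι := by
    rw [← Fintype.card_sum]
    exact Fintype.card_congr (Equiv.sumCompl _)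
  calc ∑ s ∈ latticeWalks ι z, rexp (∑ i, c i * latticeStep (s i) j)
      = ∑ s ∈ latticeWalks ι z,
          rexp (∑ i : {i // ¬ c i = 0}, c i * latticeStep (s i) j) :=
        Finset.sum_congr rfl fun s _ => congrArg rexp (hdrop _ (by simp +contextual))
    _ ≤ _ :=
        sum_latticeWalks_restrict_le _ z
          (F := fun t => rexp (∑ i : {i // ¬ c i = 0}, c i * latticeStep (t i) j))
          fun _ => (Real.exp_pos _).le
    _ ≤ ((2 * d) ^ Fintype.card {i // ¬ c i = 0} *
          rexp ((∑ i : {i // ¬ c i = 0}, c i ^ 2) / 2)) * ((2 * d) ^ n * √(d / (n + 1)) ^ d) := by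
        gcongr
        exact sum_exp_sum_mul_latticeStep_le (fun i : {i // ¬ c i = 0} => c i) j
    _ = (2 * d) ^ Fintype.card ι * rexp ((∑ i, c i ^ 2) / 2) * √(d / (n + 1)) ^ d := by
        rw [hdrop (fun i => c i ^ 2) (by simp +contextual), ← hcard, pow_add]
        ring

end LatticeWalks

lemma clamp01_mono : Monotone clamp01 := fun _ _ h =>
  min_le_min_left _ (max_le_max_left _ h)

lemma clamp01_nonneg (r : ℝ) : 0 ≤ clamp01 r := le_min zero_le_one (le_max_left _ _)

lemma clamp01_le_one (r : ℝ) : clamp01 r ≤ 1 := min_le_left _ _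

lemma clamp01_eq_sub (r : ℝ) : clamp01 r = max 0 r - max 0 (r - 1) := by
  obtain h | h := le_total r 1
  · rw [clamp01, max_eq_left (sub_nonpos.2 h), sub_zero, min_eq_right (max_le zero_le_one h)]
  · rw [clamp01_of_one_le h, max_eq_right (zero_le_one.trans h), max_eq_right (sub_nonneg.2 h),
      sub_sub_cancel]

lemma sum_clamp01_sub {N : ℕ} {t : ℝ} (h0 : 0 ≤ t) (hN : t ≤ N) :
    ∑ i : Fin N, clamp01 (t - (i : ℕ)) = t := by
  have htelescope : ∀ i : ℕ, clamp01 (t - i) = max 0 (t - i) - max 0 (t - (i + 1 : ℕ)) := by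
    intro i
    rw [clamp01_eq_sub, Nat.cast_succ, sub_sub]
  rw [Fin.sum_univ_eq_sum_range fun i : ℕ => clamp01 (t - i)]
  simp only [htelescope]
  rw [Finset.sum_range_sub' fun i : ℕ => max 0 (t - i)]
  simp [h0, hN]

/-- The weight of the `i`-th step in the increment of a piecewise linear `N`-step path from time
`u` to time `v`. -/
def incrementWeight (N : ℕ) (u v : ℝ) (i : Fin N) : ℝ :=
  clamp01 (N * v - (i : ℕ)) - clamp01 (N * u - (i : ℕ))

lemma pwLinE_sub_pwLinE {d N : ℕ} (x : Ed d) (w : Fin N → Ed d) (u v : unitInterval) :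
    pwLinE x N w v - pwLinE x N w u = ∑ i, incrementWeight N u v i • w i := by
  simp only [incrementWeight, sub_smul, Finset.sum_sub_distrib]
  exact add_sub_add_left_eq_sub _ _ x

section IncrementWeight

variable {N : ℕ} {u v : ℝ}

lemma sum_incrementWeight_sq_le (hu : 0 ≤ u) (huv : u ≤ v) (hv : v ≤ 1) :
    ∑ i, incrementWeight N u v i ^ 2 ≤ N * (v - u) := by
  have hle : ∀ {t : ℝ}, t ≤ 1 → N * t ≤ N := fun ht => mul_le_of_le_one_right N.cast_nonneg ht
  calc ∑ i, incrementWeight N u v i ^ 2 ≤ ∑ i, incrementWeight N u v i := by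
        refine Finset.sum_le_sum fun i _ => pow_le_of_le_one ?_ ?_ two_ne_zero
        · exact sub_nonneg.2 (clamp01_mono (by gcongr))
        · exact (sub_le_self _ (clamp01_nonneg _)).trans (clamp01_le_one _)
    _ = N * v - N * u := by
        simp only [incrementWeight]
        rw [Finset.sum_sub_distrib, sum_clamp01_sub (mul_nonneg N.cast_nonneg (hu.trans huv))
          (hle hv), sum_clamp01_sub (mul_nonneg N.cast_nonneg hu) (hle (huv.trans hv))]
    _ = N * (v - u) := (mul_sub _ _ _).symm

lemma mem_Ico_of_incrementWeight_ne_zero (hu : 0 ≤ u) (huv : u ≤ v) {i : Fin N}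
    (hi : incrementWeight N u v i ≠ 0) : (i : ℕ) ∈ Finset.Ico ⌊N * u⌋₊ ⌈N * v⌉₊ := by
  have hmono : (N : ℝ) * u ≤ N * v := by gcongr
  rw [Finset.mem_Ico]
  contrapose! hi
  obtain hlt | hge := lt_or_ge (i : ℕ) ⌊N * u⌋₊
  · have hi1 : ((i : ℕ) : ℝ) + 1 ≤ N * u := by
      exact_mod_cast (Nat.le_floor_iff (by positivity)).1 (Nat.succ_le_of_lt hlt)
    rw [incrementWeight, clamp01_of_one_le (by linarith), clamp01_of_one_le (by linarith), sub_self]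
  · have hi1 : (N : ℝ) * v ≤ (i : ℕ) := Nat.ceil_le.1 (hi hge)
    rw [incrementWeight, clamp01_of_nonpos (by linarith), clamp01_of_nonpos (by linarith), sub_self]

lemma add_one_le_four_mul_card_incrementWeight_eq_zero (hu : 0 ≤ u) (huv : u ≤ v)
    (h : v - u ≤ 1 / 2) :
    (N + 1 : ℝ) ≤ 4 * (Fintype.card {i : Fin N // incrementWeight N u v i = 0} + 1) := by
  set n := Fintype.card {i : Fin N // incrementWeight N u v i = 0}
  have hcompl : N ≤ n + (⌈N * v⌉₊ - ⌊N * u⌋₊) := by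
    have hcard : Fintype.card {i : Fin N // ¬ incrementWeight N u v i = 0}
        ≤ (Finset.Ico ⌊N * u⌋₊ ⌈N * v⌉₊).card := by
      rw [Fintype.card_subtype]
      exact Finset.card_le_card_of_injOn (fun i => i)
        (fun i hi => mem_Ico_of_incrementWeight_ne_zero hu huv (Finset.mem_filter.1 hi).2)
        Fin.val_injective.injOn
    rw [Fintype.card_subtype_compl, Fintype.card_fin, Nat.card_Ico] at hcard
    omega
  have hwindow : ⌈N * v⌉₊ ≤ ⌊N * u⌋₊ + (N + 3) / 2 := by
    refine Nat.ceil_le.2 ?_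
    have hfloor := Nat.lt_floor_add_one (N * u)
    have hlength : N * (v - u) ≤ N * (1 / 2) := by gcongr
    have hhalf : (N + 2 : ℝ) ≤ 2 * ((N + 3) / 2 : ℕ) := by
      exact_mod_cast (by omega : N + 2 ≤ 2 * ((N + 3) / 2))
    push_cast at hhalf ⊢
    linarith
  exact_mod_cast (by omega : N + 1 ≤ 4 * (n + 1))

end IncrementWeight

section VxyaN

lemma stepVec_apply {d : ℕ} (a : ℝ) (p : Fin d × Bool) (j : Fin d) :
    stepVec a p j = a * latticeStep p j := by
  have hsign : (if p.2 then a else -a) = a * boolSign p.2 := by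
    cases p.2 <;> simp [boolSign]
  simp only [stepVec, latticeStep, PiLp.smul_apply, PiLp.single_apply, Pi.single_apply,
    smul_eq_mul, hsign]
  split_ifs <;> simp

variable {d : ℕ} {x y : Ed d} {a : ℝ} {z : Fin d → ℤ}

lemma add_sum_stepVec_eq_iff (ha : a ≠ 0) (hz : ∀ j, (x - y) j = a * z j) {N : ℕ}
    (s : Fin N → Fin d × Bool) :
    x + ∑ i, stepVec a (s i) = y ↔ s ∈ latticeWalks (Fin N) (-z) := by
  rw [mem_latticeWalks, ← eq_sub_iff_add_eq', ← neg_sub x y, PiLp.ext_iff, funext_iff]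
  refine forall_congr' fun j => ?_
  rw [PiLp.neg_apply, hz j, WithLp.ofLp_sum, Finset.sum_apply, Finset.sum_apply, Pi.neg_apply,
    ← mul_neg]
  simp only [stepVec_apply]
  rw [← Finset.mul_sum, mul_right_inj' ha]
  norm_cast

lemma VxyaN_le_sum_latticeWalks (hd : 1 ≤ d) (ha : 0 < a) (hz : ∀ j, (x - y) j = a * z j) (N : ℕ)
    {B : Set (Omega2 x y)} (hB : MeasurableSet B) {F : (Fin N → Fin d × Bool) → ℝ}
    (hF0 : ∀ s, 0 ≤ F s)
    (hF : ∀ s h, pwLin2 x y N (fun i => stepVec a (s i)) h ∈ B → 1 ≤ F s) :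
    VxyaN x y a N B ≤ ENNReal.ofReal (((2 * d : ℝ) ^ N)⁻¹ * (a ^ d)⁻¹ *
      ∑ s ∈ latticeWalks (Fin N) (-z), F s) := by
  have : (0 : ℝ) < d := by exact_mod_cast hd
  have hmass : ENNReal.ofReal (a ^ (-(d : ℝ))) * (((2 * d : ℕ) : ℝ≥0∞) ^ N)⁻¹
      = ENNReal.ofReal (((2 * d : ℝ) ^ N)⁻¹ * (a ^ d)⁻¹) := by
    rw [mul_comm, ENNReal.ofReal_mul (by positivity), Real.rpow_neg ha.le, Real.rpow_natCast,
      ENNReal.ofReal_inv_of_pos (x := (2 * d : ℝ) ^ N) (by positivity),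
      ENNReal.ofReal_pow (p := 2 * d) (by positivity), ← ENNReal.ofReal_natCast]
    push_cast
    rfl
  rw [VxyaN, Measure.sum_apply _ hB, tsum_fintype, Finset.mul_sum,
    Finset.sum_subtype _ fun s => (add_sum_stepVec_eq_iff ha.ne' hz s).symm,
    ENNReal.ofReal_sum_of_nonneg fun s _ => mul_nonneg (by positivity) (hF0 s.1)]
  refine Finset.sum_le_sum fun s _ => ?_
  rw [Measure.smul_apply, hmass, smul_eq_mul, Measure.dirac_apply' _ hB,
    ENNReal.ofReal_mul (p := ((2 * d : ℝ) ^ N)⁻¹ * (a ^ d)⁻¹) (by positivity)]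
  gcongr
  exact Set.indicator_apply_le' (fun hs => ENNReal.one_le_ofReal.2 (hF _ _ hs)) fun _ => zero_le

lemma VxyaN_univ_le (hd : 1 ≤ d) (ha : 0 < a) (hz : ∀ j, (x - y) j = a * z j) (N : ℕ) :
    VxyaN x y a N univ ≤ ENNReal.ofReal ((√d / (a * √(N + 1))) ^ d) := by
  have : (0 : ℝ) < d := by exact_mod_cast hd
  have hcard := card_latticeWalks_le (ι := Fin N) (-z)
  simp only [Fintype.card_fin] at hcard
  refine (VxyaN_le_sum_latticeWalks hd ha hz N MeasurableSet.univ (F := fun _ => 1)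
    (fun _ => zero_le_one) fun _ _ _ => le_rfl).trans (ENNReal.ofReal_le_ofReal ?_)
  rw [Finset.sum_const, nsmul_eq_mul, mul_one]
  calc ((2 * d : ℝ) ^ N)⁻¹ * (a ^ d)⁻¹ * (latticeWalks (Fin N) (-z)).card
      ≤ ((2 * d : ℝ) ^ N)⁻¹ * (a ^ d)⁻¹ * ((2 * d) ^ N * √(d / (N + 1)) ^ d) := by gcongr
    _ = (√d / (a * √(N + 1))) ^ d := by
        rw [Real.sqrt_div' _ (by positivity), mul_comm a, ← div_div, div_pow _ a]
        field_simp

lemma exists_lt_abs_apply_of_sqrt_mul_lt_norm {r : ℝ} (hr : 0 ≤ r) {v : Ed d} (h : √d * r < ‖v‖) :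
    ∃ j, r < |v j| := by
  contrapose! h
  calc ‖v‖ = √(∑ j, |v j| ^ 2) := EuclideanSpace.norm_eq v
    _ ≤ √(∑ _j : Fin d, r ^ 2) :=
        Real.sqrt_le_sqrt (Finset.sum_le_sum fun j _ => pow_le_pow_left₀ (abs_nonneg _) (h j) 2)
    _ = √d * r := by
        rw [Finset.sum_const, Finset.card_univ, Fintype.card_fin, nsmul_eq_mul,
          Real.sqrt_mul d.cast_nonneg, Real.sqrt_sq hr]

lemma sum_latticeWalks_exp_increment_le {N : ℕ} {u v : ℝ} (hu : 0 ≤ u) (huv : u ≤ v) (hv : v ≤ 1)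
    (h : v - u ≤ 1 / 2) {b : ℝ} (hb : b ^ 2 * (N * (v - u)) ≤ 1) (z : Fin d → ℤ) (j : Fin d) :
    ∑ s ∈ latticeWalks (Fin N) z, rexp (b * ∑ i, incrementWeight N u v i * latticeStep (s i) j)
      ≤ (2 * d) ^ N * (rexp (1 / 2) * (2 * √d / √(N + 1)) ^ d) := by
  have hcard : (N + 1 : ℝ)
      ≤ 4 * (Fintype.card {i : Fin N // b * incrementWeight N u v i = 0} + 1) := by
    refine (add_one_le_four_mul_card_incrementWeight_eq_zero hu huv h).trans ?_
    gcongr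
    exact Fintype.card_subtype_mono _ _ fun i hi => by rw [hi, mul_zero]
  have hsq : ∑ i, (b * incrementWeight N u v i) ^ 2 ≤ 1 := by
    simp only [mul_pow, ← Finset.mul_sum]
    exact (mul_le_mul_of_nonneg_left (sum_incrementWeight_sq_le hu huv hv) (sq_nonneg b)).trans hb
  have hchernoff := sum_latticeWalks_exp_le (fun i => b * incrementWeight N u v i) z j
  simp only [Fintype.card_fin, mul_assoc b, ← Finset.mul_sum] at hchernoff
  refine hchernoff.trans ?_
  rw [mul_assoc]
  gcongr
  rw [← Real.sqrt_sq (zero_le_two : (0 : ℝ) ≤ 2), ← Real.sqrt_mul (by positivity),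
    ← Real.sqrt_div' _ (by positivity)]
  refine Real.sqrt_le_sqrt ?_
  rw [div_le_div_iff₀ (by positivity) (by positivity)]
  nlinarith [(d.cast_nonneg : (0 : ℝ) ≤ d)]

lemma exists_lt_abs_sum_incrementWeight_of_lt_dist (ha : 0 < a) {N : ℕ} {u v : unitInterval}
    {r : ℝ} (hr : 0 ≤ r) {s : Fin N → Fin d × Bool}
    (h : √d * (a * r) < dist (pwLinE x N (fun i => stepVec a (s i)) u)
      (pwLinE x N (fun i => stepVec a (s i)) v)) :
    ∃ j, r < |∑ i, incrementWeight N u v i * latticeStep (s i) j| := by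
  rw [dist_comm, dist_eq_norm, pwLinE_sub_pwLinE] at h
  obtain ⟨j, hj⟩ := exists_lt_abs_apply_of_sqrt_mul_lt_norm (by positivity) h
  have hcoord : (∑ i, incrementWeight N u v i • stepVec a (s i)) j
      = a * ∑ i, incrementWeight N u v i * latticeStep (s i) j := by
    rw [WithLp.ofLp_sum, Finset.sum_apply, Finset.mul_sum]
    refine Finset.sum_congr rfl fun i _ => ?_
    rw [PiLp.smul_apply, stepVec_apply, smul_eq_mul, mul_left_comm]
  rw [hcoord, abs_mul, abs_of_pos ha] at hj
  exact ⟨j, lt_of_mul_lt_mul_left hj ha.le⟩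

lemma one_le_sum_exp_of_lt_abs {κ : Type*} [Fintype κ] {b r : ℝ} (hb : 0 ≤ b) {Y : κ → ℝ} {j : κ}
    (h : r < |Y j|) : 1 ≤ ∑ j, (rexp (b * Y j) + rexp (-b * Y j)) * rexp (-(b * r)) :=
  calc 1 ≤ rexp |b * Y j| * rexp (-(b * r)) := by
        rw [← Real.exp_add, abs_mul, abs_of_nonneg hb, ← sub_eq_add_neg, ← mul_sub]
        exact Real.one_le_exp (mul_nonneg hb (sub_nonneg.2 h.le))
    _ ≤ (rexp (b * Y j) + rexp (-b * Y j)) * rexp (-(b * r)) := by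
        rw [neg_mul]
        gcongr
        exact Real.exp_abs_le _
    _ ≤ ∑ j, (rexp (b * Y j) + rexp (-b * Y j)) * rexp (-(b * r)) :=
        Finset.single_le_sum (f := fun j => (rexp (b * Y j) + rexp (-b * Y j)) * rexp (-(b * r)))
          (fun _ _ => by positivity) (Finset.mem_univ j)

lemma VxyaN_lt_dist_le_exp (hd : 1 ≤ d) (ha : 0 < a) (hz : ∀ j, (x - y) j = a * z j) (N : ℕ)
    {u v : unitInterval} (huv : u ≤ v) (h : (v - u : ℝ) ≤ 1 / 2) {b r : ℝ} (hb0 : 0 ≤ b)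
    (hb : b ^ 2 * (N * (v - u)) ≤ 1) (hr : 0 ≤ r) :
    VxyaN x y a N {ω | √d * (a * r) < dist (ω.1 u) (ω.1 v)} ≤ ENNReal.ofReal
      (2 * d * (rexp (1 / 2) * (2 * √d / (a * √(N + 1))) ^ d) * rexp (-(b * r))) := by
  set Y : Fin d → (Fin N → Fin d × Bool) → ℝ := fun j s =>
    ∑ i, incrementWeight N u v i * latticeStep (s i) j
  set M := (2 * d : ℝ) ^ N * (rexp (1 / 2) * (2 * √d / √(N + 1)) ^ d)
  have hmeas : MeasurableSet {ω : Omega2 x y | √d * (a * r) < dist (ω.1 u) (ω.1 v)} :=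
    (isOpen_lt continuous_const (by fun_prop)).measurableSet
  have hmgf : ∀ (b' : ℝ) (j : Fin d), b' ^ 2 * (N * (v - u)) ≤ 1 →
      ∑ s ∈ latticeWalks (Fin N) (-z), rexp (b' * Y j s) ≤ M := fun b' j hb' =>
    sum_latticeWalks_exp_increment_le u.2.1 huv v.2.2 h hb' (-z) j
  refine (VxyaN_le_sum_latticeWalks hd ha hz N hmeas
    (F := fun s => ∑ j, (rexp (b * Y j s) + rexp (-b * Y j s)) * rexp (-(b * r)))
    (fun s => by positivity) fun s _ hω => ?_).trans (ENNReal.ofReal_le_ofReal ?_)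
  · obtain ⟨j, hj⟩ := exists_lt_abs_sum_incrementWeight_of_lt_dist ha hr hω
    exact one_le_sum_exp_of_lt_abs (Y := fun j => Y j s) hb0 hj
  · calc ((2 * d : ℝ) ^ N)⁻¹ * (a ^ d)⁻¹ * ∑ s ∈ latticeWalks (Fin N) (-z),
          ∑ j, (rexp (b * Y j s) + rexp (-b * Y j s)) * rexp (-(b * r))
        = ((2 * d : ℝ) ^ N)⁻¹ * (a ^ d)⁻¹ * ((∑ j, (∑ s ∈ latticeWalks (Fin N) (-z),
            rexp (b * Y j s) + ∑ s ∈ latticeWalks (Fin N) (-z), rexp (-b * Y j s)))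
            * rexp (-(b * r))) := by
          rw [Finset.sum_comm]
          simp only [← Finset.sum_mul, Finset.sum_add_distrib]
      _ ≤ ((2 * d : ℝ) ^ N)⁻¹ * (a ^ d)⁻¹ * ((∑ _j : Fin d, (M + M)) * rexp (-(b * r))) := by
          gcongr with j
          · exact hmgf b j hb
          · exact hmgf (-b) j (by rwa [neg_sq])
      _ = 2 * d * (rexp (1 / 2) * (2 * √d / (a * √(N + 1))) ^ d) * rexp (-(b * r)) := by
          have : (0 : ℝ) < d := by exact_mod_cast hd
          rw [Finset.sum_const, Finset.card_univ, Fintype.card_fin, nsmul_eq_mul, mul_comm a,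
            ← div_div, div_pow _ a]
          simp only [M]
          field_simp
          ring

lemma VxyaN_lt_dist_le_pow (hd : 1 ≤ d) (ha : 0 < a) (hz : ∀ j, (x - y) j = a * z j) (N : ℕ)
    {u v : unitInterval} (huv : u < v) (h : (v - u : ℝ) ≤ 1 / 2) {ε : ℝ} (hε : 0 < ε) (q : ℕ) :
    VxyaN x y a N {ω | ε < dist (ω.1 u) (ω.1 v)} ≤ ENNReal.ofReal
      (2 * d * (rexp (1 / 2) * (2 * √d / (a * √(N + 1))) ^ d) *
        ((2 * q).factorial * (d * (a * √(N + 1)) ^ 2 * (v - u) / ε ^ 2) ^ q)) := by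
  have hd0 : (0 : ℝ) < d := mod_cast hd
  have huv0 : (0 : ℝ) < v - u := sub_pos.2 huv
  set b : ℝ := (√((N + 1) * (v - u)))⁻¹ with hb
  set r : ℝ := ε / (√d * a) with hr
  have hb2 : b ^ 2 * (N * (v - u)) ≤ 1 := by
    rw [hb, inv_pow, sq_sqrt (by positivity), inv_mul_le_one₀ (by positivity)]
    nlinarith
  have hε_eq : √d * (a * r) = ε := by
    rw [hr]
    field_simp
  have hbr : (b * r) ^ 2 = (d * (a * √(N + 1)) ^ 2 * (v - u) / ε ^ 2)⁻¹ := by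
    rw [mul_pow, hb, inv_pow, sq_sqrt (by positivity), hr, div_pow, mul_pow, sq_sqrt hd0.le,
      mul_pow, sq_sqrt (by positivity)]
    field_simp
  have htail : rexp (-(b * r)) ≤
      (2 * q).factorial * (d * (a * √(N + 1)) ^ 2 * (v - u) / ε ^ 2) ^ q := by
    have hbr0 : 0 < b * r := by positivity
    calc rexp (-(b * r)) = (rexp (b * r))⁻¹ := Real.exp_neg _
      _ ≤ ((b * r) ^ (2 * q) / (2 * q).factorial)⁻¹ :=
          inv_anti₀ (by positivity) (Real.pow_div_factorial_le_exp _ hbr0.le _)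
      _ = _ := by rw [pow_mul, hbr, inv_div, inv_pow, div_inv_eq_mul]
  have hexp := VxyaN_lt_dist_le_exp hd ha hz N huv.le h (b := b) (r := r) (by positivity) hb2
    (by positivity)
  rw [hε_eq] at hexp
  exact hexp.trans (ENNReal.ofReal_le_ofReal (by gcongr))

end VxyaN

section KolmogorovCriterion

lemma isCompact_of_isClosed_of_equicontinuous {α E : Type*} [TopologicalSpace α] [CompactSpace α]
    [PseudoMetricSpace E] {A : Set C(α, E)} (hA : IsClosed A) {s : Set E} (hs : IsCompact s)
    (hrange : ∀ ω ∈ A, ∀ t, ω t ∈ s) (hequi : Equicontinuous fun (ω : A) t => ω.1 t) :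
    IsCompact A := by
  let e := (ContinuousMap.isometryEquivBoundedOfCompact α E).toHomeomorph
  rw [← e.isCompact_image]
  refine BoundedContinuousFunction.arzela_ascoli₂ s hs _ (e.isClosed_image.2 hA) ?_ ?_
  · rintro _ t ⟨ω, hω, rfl⟩
    exact hrange ω hω t
  · intro t U hU
    filter_upwards [hequi t U hU] with t' ht'
    rintro ⟨_, ω, hω, rfl⟩
    exact ht' ⟨ω, hω⟩

/-- The dyadic time `i / 2ⁿ`, clamped to `[0, 1]`. -/
def dyadicTime (n i : ℕ) : unitInterval := projIcc 0 1 zero_le_one (i / 2 ^ n)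

lemma coe_dyadicTime {n i : ℕ} (h : i ≤ 2 ^ n) : (dyadicTime n i : ℝ) = i / 2 ^ n := by
  rw [dyadicTime, projIcc_of_mem zero_le_one
    ⟨by positivity, div_le_one_of_le₀ (mod_cast h) (by positivity)⟩]

lemma dyadicTime_eq_one {n i : ℕ} (h : 2 ^ n ≤ i) : dyadicTime n i = 1 :=
  projIcc_of_right_le _ <| (one_le_div (by positivity)).2 (mod_cast h)

lemma dyadicTime_succ_two_mul (n i : ℕ) : dyadicTime (n + 1) (2 * i) = dyadicTime n i := by
  rw [dyadicTime, dyadicTime, pow_succ', Nat.cast_mul, Nat.cast_ofNat,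
    mul_div_mul_left _ _ two_ne_zero]

lemma tendsto_dyadicTime_floor (t : unitInterval) :
    Tendsto (fun n => dyadicTime n ⌊(t : ℝ) * 2 ^ n⌋₊) atTop (𝓝 t) := by
  have h : Tendsto (fun n : ℕ => (⌊(t : ℝ) * 2 ^ n⌋₊ / 2 ^ n : ℝ)) atTop (𝓝 t) :=
    (tendsto_nat_floor_mul_div_atTop t.2.1).comp (tendsto_pow_atTop_atTop_of_one_lt one_lt_two)
  have hproj := (continuous_projIcc (h := zero_le_one' ℝ)).tendsto t
  rw [projIcc_val] at hproj
  exact hproj.comp h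

variable {E : Type*} [PseudoMetricSpace E] {R ρ : ℝ}

/-- Paths whose increment over each dyadic interval of length `2⁻ⁿ`, `n ≥ 1`, is at most `R ρⁿ`.
The index `i` is unrestricted because `dyadicTime` is constant past time `1`. -/
def dyadicHolder (E : Type*) [PseudoMetricSpace E] (R ρ : ℝ) : Set C(unitInterval, E) :=
  {ω | ∀ n i : ℕ,
    dist (ω (dyadicTime (n + 1) i)) (ω (dyadicTime (n + 1) (i + 1))) ≤ R * ρ ^ (n + 1)}

lemma isClosed_dyadicHolder : IsClosed (dyadicHolder E R ρ) := by
  simp only [dyadicHolder, Set.ofPred_forall]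
  exact isClosed_iInter fun n => isClosed_iInter fun i => isClosed_le (by fun_prop) continuous_const

lemma dist_dyadicTime_floor_le_of_mem_dyadicHolder (hρ0 : 0 ≤ ρ) (hρ1 : ρ < 1) (hR : 0 ≤ R)
    {ω : C(unitInterval, E)} (hω : ω ∈ dyadicHolder E R ρ) (t : unitInterval) (n : ℕ) :
    dist (ω (dyadicTime n ⌊(t : ℝ) * 2 ^ n⌋₊)) (ω t) ≤ R * ρ * ρ ^ n / (1 - ρ) := by
  refine dist_le_of_le_geometric_of_tendsto ρ (R * ρ) hρ1 (fun n => ?_)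
    ((ω.continuous.tendsto t).comp (tendsto_dyadicTime_floor t)) n
  have hfloor : ⌊(t : ℝ) * 2 ^ (n + 1)⌋₊ / 2 = ⌊(t : ℝ) * 2 ^ n⌋₊ := by
    rw [← Nat.floor_div_ofNat, pow_succ, ← mul_assoc, mul_div_cancel_right₀ _ two_ne_zero]
  rw [Function.comp_apply, Function.comp_apply, ← dyadicTime_succ_two_mul, mul_assoc, ← pow_succ']
  rcases Nat.mod_two_eq_zero_or_one ⌊(t : ℝ) * 2 ^ (n + 1)⌋₊ with h | h
  · rw [show ⌊(t : ℝ) * 2 ^ (n + 1)⌋₊ = 2 * ⌊(t : ℝ) * 2 ^ n⌋₊ by omega, dist_self]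
    positivity
  · rw [show ⌊(t : ℝ) * 2 ^ (n + 1)⌋₊ = 2 * ⌊(t : ℝ) * 2 ^ n⌋₊ + 1 by omega]
    exact hω n _

lemma dist_le_of_mem_dyadicHolder (hρ0 : 0 ≤ ρ) (hρ1 : ρ < 1) (hR : 0 ≤ R)
    {ω : C(unitInterval, E)} (hω : ω ∈ dyadicHolder E R ρ) {s t : unitInterval} {n : ℕ}
    (hst : dist s t ≤ 1 / 2 ^ (n + 1)) :
    dist (ω s) (ω t) ≤ R * ρ ^ (n + 1) * ((1 + ρ) / (1 - ρ)) := by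
  wlog hle : s ≤ t generalizing s t
  · rw [dist_comm]
    exact this (by rwa [dist_comm]) (le_of_not_ge hle)
  set i := ⌊(s : ℝ) * 2 ^ (n + 1)⌋₊
  set j := ⌊(t : ℝ) * 2 ^ (n + 1)⌋₊
  have hij : i ≤ j := Nat.floor_le_floor (mul_le_mul_of_nonneg_right hle (by positivity))
  have hji : j ≤ i + 1 := by
    rw [← Nat.floor_add_one (mul_nonneg s.2.1 (by positivity))]
    refine Nat.floor_le_floor ?_
    rw [dist_comm, Subtype.dist_eq, Real.dist_eq, le_div_iff₀ (by positivity)] at hst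
    nlinarith [le_abs_self ((t : ℝ) - s), pow_pos (zero_lt_two (α := ℝ)) (n + 1)]
  have hgrid : dist (ω (dyadicTime (n + 1) i)) (ω (dyadicTime (n + 1) j)) ≤ R * ρ ^ (n + 1) := by
    obtain h | h : j = i ∨ j = i + 1 := by omega
    · rw [h, dist_self]
      positivity
    · rw [h]
      exact hω n i
  have hs := dist_dyadicTime_floor_le_of_mem_dyadicHolder hρ0 hρ1 hR hω s (n + 1)
  have ht := dist_dyadicTime_floor_le_of_mem_dyadicHolder hρ0 hρ1 hR hω t (n + 1)
  rw [dist_comm] at hs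
  calc dist (ω s) (ω t)
      ≤ R * ρ * ρ ^ (n + 1) / (1 - ρ) + R * ρ ^ (n + 1) + R * ρ * ρ ^ (n + 1) / (1 - ρ) :=
        (dist_triangle4 _ _ _ _).trans (add_le_add_three hs hgrid ht)
    _ = R * ρ ^ (n + 1) * ((1 + ρ) / (1 - ρ)) := by
        have : 1 - ρ ≠ 0 := (sub_pos.2 hρ1).ne'
        field_simp
        ring

lemma uniformEquicontinuous_dyadicHolder (hρ0 : 0 ≤ ρ) (hρ1 : ρ < 1) (hR : 0 ≤ R) :
    UniformEquicontinuous fun (ω : dyadicHolder E R ρ) t => ω.1 t := by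
  rw [Metric.uniformEquicontinuous_iff]
  intro ε hε
  have hlim : Tendsto (fun n : ℕ => R * ρ ^ (n + 1) * ((1 + ρ) / (1 - ρ))) atTop (𝓝 0) := by
    simpa only [mul_zero, zero_mul, Function.comp_def] using
      (((tendsto_pow_atTop_nhds_zero_of_lt_one hρ0 hρ1).comp
        (tendsto_add_atTop_nat 1)).const_mul R).mul_const ((1 + ρ) / (1 - ρ))
  obtain ⟨n, hn⟩ := (hlim.eventually_lt_const hε).exists
  exact ⟨1 / 2 ^ (n + 1), by positivity, fun s t hst ω =>
    (dist_le_of_mem_dyadicHolder hρ0 hρ1 hR ω.2 hst.le).trans_lt hn⟩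

lemma isCompact_dyadicHolder_inter_eval_zero [ProperSpace E] (hρ0 : 0 ≤ ρ) (hρ1 : ρ < 1)
    (hR : 0 ≤ R) (x : E) (r : ℝ) :
    IsCompact (dyadicHolder E R ρ ∩ {ω | ω 0 ∈ Metric.closedBall x r}) := by
  set D := R * ρ ^ (0 + 1) * ((1 + ρ) / (1 - ρ))
  refine isCompact_of_isClosed_of_equicontinuous
    (isClosed_dyadicHolder.inter (Metric.isClosed_closedBall.preimage (by fun_prop)))
    (isCompact_closedBall x (D + D + r)) ?_ ?_
  · rintro ω ⟨hω, hω0⟩ t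
    obtain ⟨h, ht, h0⟩ : ∃ h : unitInterval, dist t h ≤ 1 / 2 ^ (0 + 1) ∧
        dist h 0 ≤ 1 / 2 ^ (0 + 1) := by
      refine ⟨⟨t / 2, by linarith [t.2.1], by linarith [t.2.2]⟩, ?_, ?_⟩ <;>
        rw [Subtype.dist_eq, Real.dist_eq, abs_le] <;> constructor <;>
        norm_num <;> linarith [t.2.1, t.2.2]
    exact Metric.mem_closedBall.2 <| (dist_triangle4 _ (ω h) (ω 0) _).trans <| add_le_add_three
      (dist_le_of_mem_dyadicHolder hρ0 hρ1 hR hω ht)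
      (dist_le_of_mem_dyadicHolder hρ0 hρ1 hR hω h0) hω0
  · exact (uniformEquicontinuous_dyadicHolder hρ0 hρ1 hR).equicontinuous.comp
      (Set.inclusion Set.inter_subset_left)

lemma compl_dyadicHolder_subset (hρ0 : 0 ≤ ρ) (hR : 0 ≤ R) :
    (dyadicHolder E R ρ)ᶜ ⊆ ⋃ n : ℕ, ⋃ i ∈ Finset.range (2 ^ (n + 1)), {ω | R * ρ ^ (n + 1) <
      dist (ω (dyadicTime (n + 1) i)) (ω (dyadicTime (n + 1) (i + 1)))} := by
  intro ω hω
  simp only [dyadicHolder, mem_compl_iff, mem_ofPred_eq, not_forall, not_le] at hω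
  obtain ⟨n, i, h⟩ := hω
  have hi : i < 2 ^ (n + 1) := by
    by_contra! hi
    rw [dyadicTime_eq_one hi, dyadicTime_eq_one (hi.trans i.le_succ), dist_self] at h
    exact h.not_ge (by positivity)
  simp only [mem_iUnion]
  exact ⟨n, i, Finset.mem_range.2 hi, h⟩

variable {X : Type*} [MeasurableSpace X] {φ : X → C(unitInterval, E)}

lemma measure_preimage_compl_dyadicHolder_le (hρ0 : 0 ≤ ρ) (hR : 0 ≤ R) {μ : Measure X}
    {b c : ℝ≥0∞} (hμ : ∀ n, ∀ i < 2 ^ (n + 1), μ {ω | R * ρ ^ (n + 1) <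
      dist (φ ω (dyadicTime (n + 1) i)) (φ ω (dyadicTime (n + 1) (i + 1)))}
        ≤ b * (c / 2) ^ (n + 1)) :
    μ (φ ⁻¹' (dyadicHolder E R ρ)ᶜ) ≤ b * (c * (1 - c)⁻¹) :=
  calc μ (φ ⁻¹' (dyadicHolder E R ρ)ᶜ)
      ≤ μ (⋃ n : ℕ, ⋃ i ∈ Finset.range (2 ^ (n + 1)), {ω | R * ρ ^ (n + 1) <
          dist (φ ω (dyadicTime (n + 1) i)) (φ ω (dyadicTime (n + 1) (i + 1)))}) := by
        refine measure_mono fun ω hω => ?_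
        simpa only [mem_iUnion, mem_ofPred_eq] using compl_dyadicHolder_subset hρ0 hR hω
    _ ≤ ∑' n : ℕ, ∑ i ∈ Finset.range (2 ^ (n + 1)), b * (c / 2) ^ (n + 1) :=
        (measure_iUnion_le _).trans <| ENNReal.tsum_le_tsum fun n =>
          (measure_biUnion_finset_le _ _).trans <|
            Finset.sum_le_sum fun i hi => hμ n i (Finset.mem_range.1 hi)
    _ = ∑' n : ℕ, b * (c * c ^ n) := by
        refine tsum_congr fun n => ?_
        rw [Finset.sum_const, Finset.card_range, nsmul_eq_mul, mul_left_comm, Nat.cast_pow,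
          Nat.cast_ofNat, ← mul_pow, ENNReal.mul_div_cancel two_ne_zero ENNReal.ofNat_ne_top,
          pow_succ']
    _ = b * (c * (1 - c)⁻¹) := by
        rw [ENNReal.tsum_mul_left, ENNReal.tsum_mul_left, ENNReal.tsum_geometric]

lemma exists_dyadic_rpow_div_rpow_eq {β p : ℝ} (hβ : 1 < β) (hp : 0 < p) :
    ∃ ρ c : ℝ, 0 < ρ ∧ ρ < 1 ∧ 0 < c ∧ c < 1 ∧ ∀ R > 0, ∀ n : ℕ,
      (1 / 2 ^ n : ℝ) ^ β / (R * ρ ^ n) ^ p = R ^ (-p) * (c / 2) ^ n := by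
  set c : ℝ := 2 ^ ((1 - β) / 2)
  have hc0 : 0 < c := by positivity
  have hc1 : c < 1 := rpow_lt_one_of_one_lt_of_neg one_lt_two (by linarith)
  have hc : c / 2 = (1 / 2) ^ β / c := by
    rw [div_eq_div_iff two_ne_zero hc0.ne', ← Real.rpow_add two_pos, one_div,
      Real.inv_rpow two_pos.le, ← Real.rpow_neg two_pos.le, ← Real.rpow_add_one two_ne_zero]
    congr 1
    ring
  refine ⟨c ^ p⁻¹, c, by positivity, Real.rpow_lt_one hc0.le hc1 (by positivity), hc0, hc1,
    fun R hR n => ?_⟩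
  rw [Real.mul_rpow hR.le (by positivity), ← one_div_pow, ← Real.rpow_pow_comm (by norm_num),
    ← Real.rpow_pow_comm (by positivity), Real.rpow_inv_rpow hc0.le hp.ne', hc, div_pow,
    Real.rpow_neg hR.le]
  field_simp

lemma exists_pos_ofReal_rpow_neg_mul_le {p : ℝ} (hp : 0 < p) {C η : ℝ≥0∞} (hC : C ≠ ∞)
    (hη : 0 < η) : ∃ R : ℝ, 0 < R ∧ ENNReal.ofReal (R ^ (-p)) * C ≤ η := by
  have hlim : Tendsto (fun R : ℝ => ENNReal.ofReal (R ^ (-p)) * C) atTop (𝓝 0) := by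
    simpa only [ENNReal.ofReal_zero, zero_mul] using ENNReal.Tendsto.mul_const
      (ENNReal.tendsto_ofReal (tendsto_rpow_neg_atTop hp)) (Or.inr hC)
  exact ((eventually_gt_atTop 0).and (hlim.eventually_le_const hη)).exists

/-- Kolmogorov's tightness criterion. -/
theorem isTightMeasureSet_of_measure_lt_dist_le [ProperSpace E] [TopologicalSpace X]
    (hφ : IsClosedEmbedding φ) {x : E} {r : ℝ} (hx : ∀ ω, φ ω 0 ∈ Metric.closedBall x r)
    {S : Set (Measure X)} {L : ℝ≥0∞} (hL : L ≠ ∞) {β p : ℝ} (hβ : 1 < β) (hp : 0 < p)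
    (hS : ∀ μ ∈ S, ∀ u v : unitInterval, u < v → (v - u : ℝ) ≤ 1 / 2 → ∀ ε > 0,
      μ {ω | ε < dist (φ ω u) (φ ω v)} ≤ L * ENNReal.ofReal ((v - u) ^ β / ε ^ p)) :
    IsTightMeasureSet S := by
  obtain ⟨ρ, c, hρ0, hρ1, hc0, hc1, hscale⟩ := exists_dyadic_rpow_div_rpow_eq hβ hp
  have hC : L * (ENNReal.ofReal c * (1 - ENNReal.ofReal c)⁻¹) ≠ ∞ := by
    refine ENNReal.mul_ne_top hL (ENNReal.mul_ne_top ENNReal.ofReal_ne_top ?_)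
    exact ENNReal.inv_ne_top.2 (tsub_pos_of_lt (ENNReal.ofReal_lt_one.2 hc1)).ne'
  refine isTightMeasureSet_iff_exists_isCompact_measure_compl_le.2 fun η hη => ?_
  obtain ⟨R, hR, hRη⟩ := exists_pos_ofReal_rpow_neg_mul_le hp hC hη
  refine ⟨φ ⁻¹' (dyadicHolder E R ρ ∩ {ω | ω 0 ∈ Metric.closedBall x r}), hφ.isCompact_preimage
    (isCompact_dyadicHolder_inter_eval_zero hρ0.le hρ1 hR.le x r), fun μ hμ => ?_⟩
  rw [preimage_inter, (eq_univ_of_forall hx : φ ⁻¹' {ω | ω 0 ∈ Metric.closedBall x r} = univ),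
    inter_univ, ← preimage_compl]
  refine (measure_preimage_compl_dyadicHolder_le (b := ENNReal.ofReal (R ^ (-p)) * L)
    (c := ENNReal.ofReal c) hρ0.le hR.le fun n i hi => ?_).trans (by rwa [mul_assoc])
  have hsub : (dyadicTime (n + 1) (i + 1) - dyadicTime (n + 1) i : ℝ) = 1 / 2 ^ (n + 1) := by
    rw [coe_dyadicTime hi, coe_dyadicTime hi.le, ← sub_div, Nat.cast_succ, add_sub_cancel_left]
  have hle : (1 / 2 ^ (n + 1) : ℝ) ≤ 1 / 2 :=
    one_div_le_one_div_of_le two_pos (le_self_pow₀ one_le_two n.succ_ne_zero)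
  refine (hS μ hμ _ _ (Subtype.coe_lt_coe.1 (sub_pos.1 (hsub ▸ by positivity))) (hsub ▸ hle) _
    (by positivity)).trans_eq ?_
  rw [hsub, hscale R hR, ENNReal.ofReal_mul (by positivity), ENNReal.ofReal_pow (by positivity),
    ENNReal.ofReal_div_of_pos two_pos, ENNReal.ofReal_ofNat]
  ring

end KolmogorovCriterion

lemma isClosedEmbedding_omega2_val {d : ℕ} (x y : Ed d) :
    IsClosedEmbedding (Subtype.val : Omega2 x y → PathSp d) :=
  ((isClosed_eq (by fun_prop) continuous_const).inter
    (isClosed_eq (by fun_prop) continuous_const)).isClosedEmbedding_subtypeVal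

lemma isTightMeasureSet_VxyaN_of_mul_sqrt_le {d : ℕ} (hd : 1 ≤ d) (x y : Ed d) (T : ℝ) :
    IsTightMeasureSet {μ | ∃ (a : ℝ) (N : ℕ), 0 < a ∧ a * √(N + 1) ≤ T ∧
      (∃ z : Fin d → ℤ, ∀ j, (x - y) j = a * z j) ∧ μ = VxyaN x y a N} := by
  set L : ℝ := 2 * d * rexp (1 / 2) * (2 * √d) ^ d * (2 * (d + 1)).factorial * d ^ (d + 1)
  refine isTightMeasureSet_of_measure_lt_dist_le (isClosedEmbedding_omega2_val x y)
    (fun ω => Metric.mem_closedBall.2 (dist_le_zero.2 ω.2.1))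
    (L := ENNReal.ofReal (L * T ^ (d + 2))) ENNReal.ofReal_ne_top
    (β := ↑(d + 1)) (p := ↑(2 * (d + 1))) (mod_cast Nat.lt_succ_of_le hd) (by positivity) ?_
  rintro _ ⟨a, N, ha, hT, ⟨z, hz⟩, rfl⟩ u v huv h ε hε
  have huv0 : (0 : ℝ) < v - u := sub_pos.2 huv
  rw [← ENNReal.ofReal_mul' (by positivity)]
  refine (VxyaN_lt_dist_le_pow hd ha hz N huv h hε (d + 1)).trans (ENNReal.ofReal_le_ofReal ?_)
  set τ := a * √(N + 1)
  have hτ : 0 < τ := by positivity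
  calc 2 * d * (rexp (1 / 2) * (2 * √d / τ) ^ d) *
        ((2 * (d + 1)).factorial * (d * τ ^ 2 * (v - u) / ε ^ 2) ^ (d + 1))
      = L * τ ^ (d + 2) * ((v - u) ^ (d + 1) / ε ^ (2 * (d + 1))) := by
        rw [div_pow, div_pow, mul_pow _ (v - u : ℝ), mul_pow (d : ℝ), ← pow_mul, ← pow_mul,
          show 2 * (d + 1) = d + (d + 2) by ring, pow_add τ d]
        simp only [L]
        field_simp
        ring_nf
    _ ≤ L * T ^ (d + 2) * ((v - u) ^ ((d + 1 : ℕ) : ℝ) / ε ^ ((2 * (d + 1) : ℕ) : ℝ)) := by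
        rw [Real.rpow_natCast, Real.rpow_natCast]
        gcongr

lemma isTightMeasureSet_VxyaN {d : ℕ} (hd : 1 ≤ d) (x y : Ed d) :
    IsTightMeasureSet {μ | ∃ (a : ℝ) (N : ℕ), 0 < a ∧
      (∃ z : Fin d → ℤ, ∀ j, (x - y) j = a * z j) ∧ μ = VxyaN x y a N} := by
  refine isTightMeasureSet_iff_exists_isCompact_measure_compl_le.2 fun η hη => ?_
  have hmass : Tendsto (fun τ : ℝ => ENNReal.ofReal ((√d / τ) ^ d)) atTop (𝓝 0) := by
    simpa only [id_eq, zero_pow (Nat.one_le_iff_ne_zero.1 hd), ENNReal.ofReal_zero] using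
      ENNReal.tendsto_ofReal (((tendsto_const_nhds (x := √d)).div_atTop tendsto_id).pow d)
  obtain ⟨T, hT⟩ := eventually_atTop.1 (hmass.eventually_le_const hη)
  obtain ⟨K, hK, hKη⟩ := isTightMeasureSet_iff_exists_isCompact_measure_compl_le.1
    (isTightMeasureSet_VxyaN_of_mul_sqrt_le hd x y T) η hη
  refine ⟨K, hK, ?_⟩
  rintro _ ⟨a, N, ha, ⟨z, hz⟩, rfl⟩
  rcases le_total (a * √(N + 1)) T with h | h
  · exact hKη _ ⟨a, N, ha, h, ⟨z, hz⟩, rfl⟩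
  · exact (measure_mono (subset_univ _)).trans ((VxyaN_univ_le hd ha hz N).trans (hT _ h))

lemma one_sub_mul_tsum_pow_succ_le_one {r : ℝ≥0∞} (hr : r ≤ 1) :
    (1 - r) * ∑' n : ℕ, r ^ (n + 1) ≤ 1 :=
  calc (1 - r) * ∑' n : ℕ, r ^ (n + 1) ≤ (1 - r) * ∑' n : ℕ, r ^ n := by
        gcongr (1 - r) * ∑' n, ?_ with n
        exact pow_le_pow_right_of_le_one' hr n.le_succ
    _ ≤ 1 := by
        rw [ENNReal.tsum_geometric]
        exact ENNReal.mul_inv_le_one _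

lemma Vxya_le_of_forall_VxyaN_le {d : ℕ} {x y : Ed d} {m a : ℝ} {A : Set (Omega2 x y)}
    (hA : MeasurableSet A) {b : ℝ≥0∞} (hb : ∀ N, VxyaN x y a N A ≤ b) : Vxya x y m a A ≤ b := by
  set q : ℝ := rexp (-m ^ 2 * a ^ 2 / (2 * d))
  have hq1 : q ≤ 1 := Real.exp_le_one_iff.2 (div_nonpos_of_nonpos_of_nonneg
    (by nlinarith [sq_nonneg (m * a)]) (by positivity))
  have hpow : ∀ N : ℕ, rexp (-m ^ 2 * a ^ 2 * (N + 1) / (2 * d)) = q ^ (N + 1) := by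
    intro N
    rw [← Real.exp_nat_mul]
    congr 1
    push_cast
    ring
  calc Vxya x y m a A
      = (1 - ENNReal.ofReal q) * ∑' N : ℕ, ENNReal.ofReal q ^ (N + 1) * VxyaN x y a (N + 1) A := by
        simp only [Vxya, Measure.smul_apply, Measure.sum_apply _ hA, smul_eq_mul, hpow,
          ENNReal.ofReal_pow (Real.exp_nonneg _), ENNReal.ofReal_sub _ (Real.exp_nonneg _),
          ENNReal.ofReal_one, q]
    _ ≤ (1 - ENNReal.ofReal q) * ∑' N : ℕ, ENNReal.ofReal q ^ (N + 1) * b := by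
        gcongr with N
        exact hb _
    _ = (1 - ENNReal.ofReal q) * (∑' N : ℕ, ENNReal.ofReal q ^ (N + 1)) * b := by
        rw [ENNReal.tsum_mul_right, mul_assoc]
    _ ≤ b := mul_le_of_le_one_left' (one_sub_mul_tsum_pow_succ_le_one
        (ENNReal.ofReal_le_one.2 hq1))

theorem Vxya_tight_general (d : ℕ) (hd : 1 ≤ d) (x y : Ed d) :
    IsTightMeasureSet {μ | ∃ m a : ℝ, 0 < a ∧
      (∃ z : Fin d → ℤ, ∀ j, (x - y) j = a * z j) ∧ μ = Vxya x y m a} := by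
  refine isTightMeasureSet_iff_exists_isCompact_measure_compl_le.2 fun η hη => ?_
  obtain ⟨K, hK, hKη⟩ := isTightMeasureSet_iff_exists_isCompact_measure_compl_le.1
    (isTightMeasureSet_VxyaN hd x y) η hη
  refine ⟨K, hK, ?_⟩
  rintro _ ⟨m, a, ha, hz, rfl⟩
  exact Vxya_le_of_forall_VxyaN_le hK.measurableSet.compl fun N => hKη _ ⟨a, N, ha, hz, rfl⟩

/-- **Lemma 4.4**: the family `{V'_{x,y,a} : 0 < a < 1, x - y ∈ aℤ^d}` of finite
measures on `Ω(x,y)` is tight, for `x ≠ y`. -/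
theorem Vxya_tight (d : ℕ) (hd : 1 ≤ d) (m : ℝ) (hm : 0 < m)
    (x y : Ed d) (hxy : x ≠ y) :
    ∀ η : ℝ, 0 < η → ∃ K : Set (Omega2 x y), IsCompact K ∧
      ∀ a : ℝ, 0 < a → a < 1 → (∃ z : Fin d → ℤ, ∀ j, (x - y) j = a * (z j)) →
        Vxya x y m a Kᶜ < ENNReal.ofReal η := by
  intro η hη
  obtain ⟨K, hK, hKη⟩ := isTightMeasureSet_iff_exists_isCompact_measure_compl_le.1
    (Vxya_tight_general d hd x y) _ (ENNReal.ofReal_pos.2 (half_pos hη))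
  exact ⟨K, hK, fun a ha _ hz => (hKη _ ⟨m, a, ha, hz, rfl⟩).trans_lt <|
    (ENNReal.ofReal_lt_ofReal_iff hη).2 (half_lt_self hη)⟩

end
end

section
/- Fix an integer d ≥ 1, m > 0, x ∈ ℝ^d, times 0 < t_1 < … < t_n ≤ 1 (with t_0 = 0), s ∈ ℝ and ξ_1, …, ξ_n ∈ ℝ^d, and set η_i = ξ_i + ξ_{i+1} + … + ξ_n. Then the characteristic functions of W_{x,a} converge: lim_{a→0⁺} ∫_{Γ̃(x)} exp( i(s t + ξ_1·ω(t_1) + … + ξ_n·ω(t_n)) ) dW_{x,a}(t,ω) = (m²/2) · e^{i x·η_1} · ∫_0^∞ e^{(is − m²/2)t} exp( −(t/2) Σ_{i=1}^n (t_i − t_{i−1}) |η_i|² ) dt. -/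
open MeasureTheory Filter Topology Real Set
open scoped RealInnerProductSpace ENNReal unitInterval

noncomputable section

lemma sum_range_clamp01_sub (A : ℝ) (N : ℕ) :
    ∑ k ∈ Finset.range N, clamp01 (A - k) = min (N : ℝ) (max 0 A) := by
  induction N with
  | zero => simp
  | succ N ih =>
    have hN : (0 : ℝ) ≤ N := Nat.cast_nonneg N
    rw [Finset.sum_range_succ, ih, clamp01]
    push_cast
    grind

lemma clamp01_sub_one_le_mul {r r' : ℝ} (h : r ≤ r') :
    clamp01 (r - 1) ≤ clamp01 r * clamp01 r' := by
  rcases le_total r 1 with hr | hr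
  · rw [clamp01_of_nonpos (sub_nonpos.2 hr)]
    exact mul_nonneg (clamp01_nonneg r) (clamp01_nonneg r')
  · rw [clamp01_of_one_le hr, clamp01_of_one_le (hr.trans h), mul_one]
    exact clamp01_le_one _

lemma abs_sum_clamp01_mul_clamp01_sub_min_le {A B : ℝ} {N : ℕ}
    (hAB : min A B ∈ Icc (0 : ℝ) N) :
    |∑ k ∈ Finset.range N, clamp01 (A - k) * clamp01 (B - k) - min A B| ≤ 1 := by
  wlog h : A ≤ B generalizing A B
  · simpa only [mul_comm, min_comm] using this (min_comm A B ▸ hAB) (le_of_not_ge h)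
  rw [min_eq_left h] at hAB ⊢
  have upper : ∑ k ∈ Finset.range N, clamp01 (A - k) * clamp01 (B - k) ≤ A := calc
    _ ≤ ∑ k ∈ Finset.range N, clamp01 (A - k) := Finset.sum_le_sum fun k _ =>
      mul_le_of_le_one_right (clamp01_nonneg _) (clamp01_le_one _)
    _ = A := by rw [sum_range_clamp01_sub, max_eq_right hAB.1, min_eq_right hAB.2]
  have lower : A - 1 ≤ ∑ k ∈ Finset.range N, clamp01 (A - k) * clamp01 (B - k) := calc
    A - 1 ≤ min (N : ℝ) (max 0 (A - 1)) :=
      le_min (by linarith [hAB.2]) (le_max_right _ _)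
    _ = ∑ k ∈ Finset.range N, clamp01 (A - 1 - k) := (sum_range_clamp01_sub _ N).symm
    _ ≤ _ := Finset.sum_le_sum fun k _ => by
      rw [sub_right_comm]
      exact clamp01_sub_one_le_mul (by linarith)
  rw [abs_le]
  constructor <;> linarith

section Variance

variable {ι E : Type*} [Fintype ι] [NormedAddCommGroup E] [InnerProductSpace ℝ E]

/-- The frequency paired with the `k`-th increment of an `N`-step piecewise linear path `ω` when
`∑ i, ⟪ξ i, ω (τ i)⟫` is expanded in terms of the increments; steps are counted from `0`. -/
def incrementFreq (τ : ι → ℝ) (ξ : ι → E) (N k : ℕ) : E :=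
  ∑ i, clamp01 (N * τ i - k) • ξ i

/-- The variance of `∑ i, ⟪ξ i, ω (τ i)⟫` under the `N`-step piecewise linear random walk `ω` with
standard Gaussian increments. -/
def walkVariance (τ : ι → ℝ) (ξ : ι → E) (N : ℕ) : ℝ :=
  ∑ k ∈ Finset.range N, ‖incrementFreq τ ξ N k‖ ^ 2

/-- The variance of `∑ i, ⟪ξ i, B (τ i)⟫` for a standard Brownian motion `B`. -/
def brownianVariance (τ : ι → ℝ) (ξ : ι → E) : ℝ :=
  ∑ i, ∑ j, min (τ i) (τ j) * ⟪ξ i, ξ j⟫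

lemma norm_sum_smul_sq (c : ι → ℝ) (ξ : ι → E) :
    ‖∑ i, c i • ξ i‖ ^ 2 = ∑ i, ∑ j, c i * c j * ⟪ξ i, ξ j⟫ := by
  simp_rw [← real_inner_self_eq_norm_sq, sum_inner, inner_sum, real_inner_smul_left,
    real_inner_smul_right, mul_assoc]

lemma walkVariance_nonneg (τ : ι → ℝ) (ξ : ι → E) (N : ℕ) : 0 ≤ walkVariance τ ξ N :=
  Finset.sum_nonneg fun _ _ => sq_nonneg _

lemma walkVariance_eq_sum_inner (τ : ι → ℝ) (ξ : ι → E) (N : ℕ) :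
    walkVariance τ ξ N = ∑ i, ∑ j,
      (∑ k ∈ Finset.range N, clamp01 (N * τ i - k) * clamp01 (N * τ j - k)) * ⟪ξ i, ξ j⟫ := by
  simp_rw [walkVariance, incrementFreq, norm_sum_smul_sq, Finset.sum_mul]
  rw [Finset.sum_comm]
  exact Finset.sum_congr rfl fun i _ => Finset.sum_comm

lemma mul_brownianVariance (τ : ι → ℝ) (ξ : ι → E) (N : ℕ) :
    N * brownianVariance τ ξ = ∑ i, ∑ j, min (N * τ i) (N * τ j) * ⟪ξ i, ξ j⟫ := by
  simp_rw [brownianVariance, Finset.mul_sum, ← mul_assoc,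
    mul_min_of_nonneg _ _ (Nat.cast_nonneg (α := ℝ) N)]

lemma abs_walkVariance_sub_le {τ : ι → ℝ} (hτ : ∀ i, τ i ∈ Icc (0 : ℝ) 1) (ξ : ι → E) (N : ℕ) :
    |walkVariance τ ξ N - N * brownianVariance τ ξ| ≤ ∑ i, ∑ j, |⟪ξ i, ξ j⟫| := by
  have hmin (i j : ι) : min (N * τ i) (N * τ j) ∈ Icc (0 : ℝ) N :=
    ⟨le_min (mul_nonneg N.cast_nonneg (hτ i).1) (mul_nonneg N.cast_nonneg (hτ j).1),
      (min_le_left _ _).trans (mul_le_of_le_one_right N.cast_nonneg (hτ i).2)⟩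
  simp_rw [walkVariance_eq_sum_inner, mul_brownianVariance, ← Finset.sum_sub_distrib, ← sub_mul]
  refine (Finset.abs_sum_le_sum_abs _ _).trans (Finset.sum_le_sum fun i _ => ?_)
  refine (Finset.abs_sum_le_sum_abs _ _).trans (Finset.sum_le_sum fun j _ => ?_)
  rw [abs_mul]
  exact mul_le_of_le_one_left (abs_nonneg _) (abs_sum_clamp01_mul_clamp01_sub_min_le (hmin i j))

end Variance

section SummationByParts

variable {E : Type*} [NormedAddCommGroup E] [InnerProductSpace ℝ E] {n : ℕ}

lemma sum_Iic_sub {M : Type*} [AddCommGroup M] (f : ℕ → M) (j : Fin n) :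
    ∑ l ∈ Finset.Iic j, (f (l + 1) - f l) = f (j + 1) - f 0 := by
  rw [← Finset.sum_range_sub, Nat.range_succ_eq_Iic, ← Fin.map_valEmbedding_Iic, Finset.sum_map]
  rfl

lemma sum_sub_mul_norm_sum_Ici_sq (f : ℕ → ℝ) (ξ : Fin n → E) :
    ∑ l : Fin n, (f (l + 1) - f l) * ‖∑ j ∈ Finset.Ici l, ξ j‖ ^ 2
      = ∑ i, ∑ j, (f ((min i j : Fin n) + 1) - f 0) * ⟪ξ i, ξ j⟫ := by
  simp_rw [← sum_Iic_sub, Finset.sum_mul, ← real_inner_self_eq_norm_sq, sum_inner, inner_sum,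
    Finset.mul_sum]
  rw [Finset.sum_comm' (t' := Finset.univ) (s' := Finset.Iic) (by simp)]
  refine Finset.sum_congr rfl fun i _ => ?_
  exact Finset.sum_comm' (by simp [and_comm])

lemma sum_sub_mul_norm_sum_Ici_sq_eq_brownianVariance {ts : ℕ → ℝ} (h0 : ts 0 = 0)
    (hts : MonotoneOn ts (Iic n)) (ξ : Fin n → E) :
    ∑ l : Fin n, (ts (l + 1) - ts l) * ‖∑ j ∈ Finset.Ici l, ξ j‖ ^ 2
      = brownianVariance (fun i : Fin n => ts (i + 1)) ξ := by
  have hmin (i j : Fin n) : ts ((min i j : Fin n) + 1) = min (ts (i + 1)) (ts (j + 1)) := by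
    have hmono : Monotone fun i : Fin n => ts (i + 1) := fun i j hij =>
      hts (Nat.succ_le_of_lt i.2) (Nat.succ_le_of_lt j.2) (Nat.succ_le_succ hij)
    exact hmono.map_min
  simp_rw [sum_sub_mul_norm_sum_Ici_sq, hmin, h0, sub_zero, brownianVariance]

end SummationByParts

section GeometricAverages

lemma abs_exp_sub_exp_le_of_nonpos {u v : ℝ} (hu : u ≤ 0) (hv : v ≤ 0) :
    |Real.exp u - Real.exp v| ≤ |u - v| := by
  wlog h : v ≤ u generalizing u v
  · simpa only [abs_sub_comm] using this hv hu (le_of_not_ge h)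
  rw [abs_of_nonneg (sub_nonneg.2 (Real.exp_le_exp.2 h)), abs_of_nonneg (sub_nonneg.2 h)]
  calc Real.exp u - Real.exp v = Real.exp u * (1 - Real.exp (v - u)) := by
        rw [mul_sub, mul_one, ← Real.exp_add, add_sub_cancel]
    _ ≤ 1 * (1 - Real.exp (v - u)) :=
        mul_le_mul_of_nonneg_right (Real.exp_le_one_iff.2 hu)
          (sub_nonneg.2 (Real.exp_le_one_iff.2 (sub_nonpos.2 h)))
    _ ≤ u - v := by linarith [Real.add_one_le_exp (v - u)]

lemma one_sub_norm_mul_norm_tsum_pow_mul_sub_le {𝕜 : Type*} [NormedDivisionRing 𝕜]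
    [CompleteSpace 𝕜] {z : 𝕜} (hz : ‖z‖ < 1) {f g : ℕ → 𝕜} {A ε : ℝ} (hf : ∀ N, ‖f N‖ ≤ A)
    (hfg : ∀ N, ‖f N - g N‖ ≤ ε) :
    (1 - ‖z‖) * ‖∑' N, z ^ N * f N - ∑' N, z ^ N * g N‖ ≤ ε := by
  have hgeom := hasSum_geometric_of_lt_one (norm_nonneg z) hz
  have norm_le {h : ℕ → 𝕜} {D : ℝ} (hh : ∀ N, ‖h N‖ ≤ D) (N : ℕ) :
      ‖z ^ N * h N‖ ≤ ‖z‖ ^ N * D := by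
    rw [norm_mul, norm_pow]
    exact mul_le_mul_of_nonneg_left (hh N) (by positivity)
  have summable {h : ℕ → 𝕜} {D : ℝ} (hh : ∀ N, ‖h N‖ ≤ D) : Summable fun N => z ^ N * h N :=
    .of_norm_bounded (hgeom.summable.mul_right D) (norm_le hh)
  have hg (N : ℕ) : ‖g N‖ ≤ A + ε :=
    (norm_le_norm_add_norm_sub (f N) (g N)).trans (add_le_add (hf N) (hfg N))
  rw [← (summable hf).tsum_sub (summable hg)]
  simp_rw [← mul_sub]
  calc (1 - ‖z‖) * ‖∑' N, z ^ N * (f N - g N)‖ ≤ (1 - ‖z‖) * ((1 - ‖z‖)⁻¹ * ε) :=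
        mul_le_mul_of_nonneg_left (tsum_of_norm_bounded (hgeom.mul_right ε) (norm_le hfg))
          (sub_nonneg.2 hz.le)
    _ = ε := mul_inv_cancel_left₀ (sub_pos.2 hz).ne' ε

lemma norm_cexp_neg_mul_ofReal (μ : ℂ) (b : ℝ) :
    ‖Complex.exp (-μ * b)‖ = Real.exp (-μ.re * b) := by
  rw [Complex.norm_exp, Complex.re_mul_ofReal, Complex.neg_re]

lemma norm_cexp_neg_mul_ofReal_lt_one {μ : ℂ} (hμ : 0 < μ.re) {b : ℝ} (hb : 0 < b) :
    ‖Complex.exp (-μ * b)‖ < 1 := by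
  rw [norm_cexp_neg_mul_ofReal, Real.exp_lt_one_iff, neg_mul]
  exact neg_neg_of_pos (mul_pos hμ hb)

lemma tendsto_one_sub_cexp_neg_mul_div (μ : ℂ) :
    Tendsto (fun b : ℝ => (1 - Complex.exp (-μ * b)) / b) (𝓝[>] 0) (𝓝 μ) := by
  have hderiv : HasDerivAt (fun b : ℝ => Complex.exp (-μ * b)) (-μ) 0 := by
    simpa using (Complex.ofRealCLM.hasDerivAt.const_mul (-μ)).cexp (x := 0)
  refine (neg_neg μ ▸ hderiv.tendsto_slope_zero_right.neg).congr fun b => ?_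
  rw [zero_add, Complex.ofReal_zero, mul_zero, Complex.exp_zero, Complex.real_smul,
    Complex.ofReal_inv]
  ring

lemma tendsto_one_sub_cexp_mul_tsum_cexp_pow (κ : ℂ) {μ : ℂ} (hμ : 0 < μ.re) :
    Tendsto (fun b : ℝ => (1 - Complex.exp (-κ * b)) * ∑' N : ℕ, Complex.exp (-μ * b) ^ N)
      (𝓝[>] 0) (𝓝 (κ / μ)) := by
  have hμ0 : μ ≠ 0 := fun h => by simp [h] at hμ
  refine ((tendsto_one_sub_cexp_neg_mul_div κ).div
    (tendsto_one_sub_cexp_neg_mul_div μ) hμ0).congr' ?_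
  filter_upwards [self_mem_nhdsWithin] with b (hb : 0 < b)
  rw [tsum_geometric_of_norm_lt_one (norm_cexp_neg_mul_ofReal_lt_one hμ hb), Pi.div_apply,
    ← div_eq_mul_inv, div_div_div_cancel_right₀ (by exact_mod_cast hb.ne')]

lemma nonneg_of_sub_nat_mul_le {Q : ℕ → ℝ} {c C : ℝ} (hQ0 : ∀ N, 0 ≤ Q N)
    (hQ : ∀ N : ℕ, Q N - N * c ≤ C) : 0 ≤ c := by
  by_contra! hc
  obtain ⟨N, hN⟩ := exists_nat_gt (C / -c)
  rw [div_lt_iff₀ (neg_pos.2 hc)] at hN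
  linarith [hQ0 N, hQ N]

lemma integral_cexp_neg_mul_mul_exp_neg_mul {μ : ℂ} {c : ℝ} (h : 0 < (μ + c).re) :
    ∫ t in Ioi (0 : ℝ), Complex.exp (-μ * t) * Real.exp (-t * c) = (μ + c)⁻¹ := by
  have combine (t : ℝ) : Complex.exp (-μ * t) * Real.exp (-t * c)
      = Complex.exp (-(μ + c) * t) := by
    rw [Complex.ofReal_exp, ← Complex.exp_add]
    push_cast
    ring_nf
  simp_rw [combine]
  rw [integral_exp_mul_complex_Ioi (by rwa [Complex.neg_re, neg_lt_zero]), Complex.ofReal_zero,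
    mul_zero, Complex.exp_zero, neg_div_neg_eq, one_div]

/-- The mean of `exp (-b * (i * μ.im * N + Q N))` over a geometric time `N` with
`P(N = n) = (1 - q) * q ^ n`, where `q = exp (-μ.re * b)`. -/
def geometricAverage (μ : ℂ) (Q : ℕ → ℝ) (b : ℝ) : ℂ :=
  (1 - Real.exp (-μ.re * b) : ℝ) * ∑' N : ℕ, Complex.exp (-μ * b) ^ N * Real.exp (-b * Q N)

lemma dist_geometricAverage_le {μ : ℂ} (hμ : 0 < μ.re) {P Q : ℕ → ℝ} (hP : ∀ N, 0 ≤ P N)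
    (hQ : ∀ N, 0 ≤ Q N) {C : ℝ} (hPQ : ∀ N, |P N - Q N| ≤ C) {b : ℝ} (hb : 0 < b) :
    dist (geometricAverage μ P b) (geometricAverage μ Q b) ≤ b * C := by
  have hz := norm_cexp_neg_mul_ofReal_lt_one hμ hb
  have norm_damping (N : ℕ) : ‖(Real.exp (-b * P N) : ℂ)‖ ≤ 1 := by
    rw [Complex.norm_real, Real.norm_of_nonneg (Real.exp_nonneg _), Real.exp_le_one_iff, neg_mul]
    exact neg_nonpos.2 (mul_nonneg hb.le (hP N))
  have norm_damping_sub (N : ℕ) :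
      ‖(Real.exp (-b * P N) : ℂ) - Real.exp (-b * Q N)‖ ≤ b * C := by
    rw [← Complex.ofReal_sub, Complex.norm_real, Real.norm_eq_abs]
    calc |Real.exp (-b * P N) - Real.exp (-b * Q N)| ≤ |-b * P N - -b * Q N| :=
          abs_exp_sub_exp_le_of_nonpos
            (mul_nonpos_of_nonpos_of_nonneg (neg_nonpos.2 hb.le) (hP N))
            (mul_nonpos_of_nonpos_of_nonneg (neg_nonpos.2 hb.le) (hQ N))
      _ = b * |P N - Q N| := by rw [← mul_sub, abs_mul, abs_neg, abs_of_pos hb]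
      _ ≤ b * C := mul_le_mul_of_nonneg_left (hPQ N) hb.le
  rw [geometricAverage, geometricAverage, dist_eq_norm, ← mul_sub, norm_mul, Complex.norm_real,
    ← norm_cexp_neg_mul_ofReal, Real.norm_of_nonneg (sub_nonneg.2 hz.le)]
  exact one_sub_norm_mul_norm_tsum_pow_mul_sub_le hz norm_damping norm_damping_sub

lemma geometricAverage_nat_mul (μ : ℂ) (c b : ℝ) :
    geometricAverage μ (fun N => N * c) b
      = (1 - Complex.exp (-μ.re * b)) * ∑' N : ℕ, Complex.exp (-(μ + c) * b) ^ N := by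
  have pow_eq (N : ℕ) : Complex.exp (-μ * b) ^ N * Real.exp (-b * (N * c))
      = Complex.exp (-(μ + c) * b) ^ N := by
    rw [← Complex.exp_nat_mul, ← Complex.exp_nat_mul, Complex.ofReal_exp, ← Complex.exp_add]
    push_cast
    ring_nf
  simp_rw [geometricAverage, pow_eq]
  push_cast
  rfl

lemma tendsto_geometricAverage {μ : ℂ} (hμ : 0 < μ.re) {Q : ℕ → ℝ} {c C : ℝ}
    (hQ0 : ∀ N, 0 ≤ Q N) (hQ : ∀ N : ℕ, |Q N - N * c| ≤ C) :
    Tendsto (geometricAverage μ Q) (𝓝[>] 0)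
      (𝓝 (μ.re * ∫ t in Ioi (0 : ℝ), Complex.exp (-μ * t) * Real.exp (-t * c))) := by
  have hc := nonneg_of_sub_nat_mul_le hQ0 fun N => (le_abs_self _).trans (hQ N)
  have hμc : 0 < (μ + c).re := by
    rw [Complex.add_re, Complex.ofReal_re]
    positivity
  rw [integral_cexp_neg_mul_mul_exp_neg_mul hμc, ← div_eq_mul_inv]
  have linear : Tendsto (geometricAverage μ fun N => N * c) (𝓝[>] 0) (𝓝 (μ.re / (μ + c))) :=
    (tendsto_one_sub_cexp_mul_tsum_cexp_pow μ.re hμc).congr fun b =>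
      (geometricAverage_nat_mul μ c b).symm
  have error : Tendsto (fun b : ℝ => b * C) (𝓝[>] 0) (𝓝 0) :=
    (Continuous.tendsto' (by fun_prop) 0 0 (zero_mul C)).mono_left nhdsWithin_le_nhds
  refine linear.congr_dist (squeeze_zero' (.of_forall fun b => dist_nonneg) ?_ error)
  filter_upwards [self_mem_nhdsWithin] with b hb
  exact dist_geometricAverage_le hμ (fun N => by positivity) hQ0
    (fun N => abs_sub_comm (Q N) (N * c) ▸ hQ N) hb

end GeometricAverages

section Gaussian

variable {V : Type*} [NormedAddCommGroup V] [InnerProductSpace ℝ V]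

/-- The density of the centred Gaussian on `V` with covariance `a ^ 2 • 1`. -/
def isotropicGaussianPDF (a : ℝ) (v : V) : ℝ :=
  (2 * π * a ^ 2) ^ (-(Module.finrank ℝ V : ℝ) / 2) * Real.exp (-‖v‖ ^ 2 / (2 * a ^ 2))

lemma isotropicGaussianPDF_nonneg (a : ℝ) (v : V) : 0 ≤ isotropicGaussianPDF a v := by
  unfold isotropicGaussianPDF
  positivity

lemma integral_isotropicGaussianPDF_mul_cexp_inner [FiniteDimensional ℝ V]
    [MeasurableSpace V] [BorelSpace V] {a : ℝ} (ha : a ≠ 0) (u : V) :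
    ∫ v, (isotropicGaussianPDF a v : ℂ) * Complex.exp (Complex.I * (⟪u, v⟫ : ℝ))
      = Real.exp (-(a ^ 2) * (‖u‖ ^ 2 / 2)) := by
  have ha' : (a : ℂ) ≠ 0 := by exact_mod_cast ha
  set b : ℝ := (2 * a ^ 2)⁻¹ with hb
  have hb0 : 0 < b := by positivity
  have pdf_eq (v : V) : isotropicGaussianPDF a v
      = (π / b) ^ (-(Module.finrank ℝ V : ℝ) / 2) * Real.exp (-b * ‖v‖ ^ 2) := by
    rw [isotropicGaussianPDF, hb]
    congr 2 <;> field_simp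
  have normalization : (((π / b) ^ (-(Module.finrank ℝ V : ℝ) / 2) : ℝ) : ℂ)
      * (π / b : ℂ) ^ (Module.finrank ℝ V / 2 : ℂ) = 1 := by
    rw [← Complex.ofReal_div, show (Module.finrank ℝ V / 2 : ℂ) = (Module.finrank ℝ V / 2 : ℝ) by
      push_cast; rfl, ← Complex.ofReal_cpow (by positivity), ← Complex.ofReal_mul,
      ← Real.rpow_add (by positivity), neg_div, neg_add_cancel, Real.rpow_zero, Complex.ofReal_one]
  calc ∫ v, (isotropicGaussianPDF a v : ℂ) * Complex.exp (Complex.I * (⟪u, v⟫ : ℝ))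
      = ∫ v : V, (((π / b) ^ (-(Module.finrank ℝ V : ℝ) / 2) : ℝ) : ℂ) *
          Complex.exp (-b * ‖v‖ ^ 2 + Complex.I * ⟪u, v⟫) := by
        simp_rw [pdf_eq, Complex.exp_add, Complex.ofReal_mul, mul_assoc, Complex.ofReal_exp]
        push_cast
        rfl
    _ = Complex.exp (Complex.I ^ 2 * ‖u‖ ^ 2 / (4 * b)) := by
        rw [integral_const_mul, GaussianFourier.integral_cexp_neg_mul_sq_norm_add
          (by rwa [Complex.ofReal_re]), ← mul_assoc, normalization, one_mul]
    _ = Real.exp (-(a ^ 2) * (‖u‖ ^ 2 / 2)) := by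
        rw [Complex.I_sq, hb]
        push_cast
        congr 1
        field_simp
        norm_num

end Gaussian

section Increments

variable {d N : ℕ}

/-- The increments `x_i - x_{i-1}` of the sequence `x, x_1, …, x_N`. -/
def increments (x : Ed d) (xs : Fin N → Ed d) (i : Fin N) : Ed d := xs i - prevPt x xs i

lemma continuous_uncurry_increments :
    Continuous fun p : Ed d × (Fin N → Ed d) => increments p.1 p.2 := by
  refine continuous_pi fun i => ?_
  unfold increments prevPt
  split_ifs <;> fun_prop

lemma increments_cons (x y : Ed d) (ys : Fin N → Ed d) :
    increments x (Fin.cons y ys) = Fin.cons (y - x) (increments y ys) := by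
  funext i
  refine Fin.cases rfl (fun j => ?_) i
  rcases j with ⟨_ | j, hj⟩ <;> rfl

lemma measurePreserving_increments (x : Ed d) :
    MeasurePreserving (increments x : (Fin N → Ed d) → Fin N → Ed d) := by
  induction N generalizing x with
  | zero =>
    rw [Subsingleton.elim (increments x) id]
    exact MeasurePreserving.id _
  | succ N ih =>
    have split := volume_preserving_piFinSuccAbove (fun _ : Fin (N + 1) => Ed d) 0
    have skew : MeasurePreserving
        (fun p : Ed d × (Fin N → Ed d) => (p.1 - x, increments p.1 p.2))
        (volume.prod volume) (volume.prod volume) :=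
      (measurePreserving_sub_right volume x).skew_product
        continuous_uncurry_increments.measurable (ae_of_all _ fun y => (ih y).map_eq)
    convert! (split.symm.comp skew).comp split using 1
    funext xs
    rw [← Fin.cons_self_tail xs, increments_cons]
    simp [MeasurableEquiv.piFinSuccAbove]
    rfl

end Increments

section Paths

variable {d N : ℕ} {ι : Type*} [Fintype ι] {x : Ed d}

lemma continuous_pwLinE (x : Ed d) : Continuous (pwLinE x N) := by
  refine ContinuousMap.continuous_of_continuous_uncurry _ ?_
  have := clamp01_continuous
  change Continuous fun p : (Fin N → Ed d) × unitInterval =>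
    x + ∑ i : Fin N, clamp01 (N * (p.2 : ℝ) - (i : ℕ)) • p.1 i
  fun_prop

lemma continuous_pwLin1 (x : Ed d) : Continuous (pwLin1 x N) :=
  (continuous_pwLinE x).subtype_mk _

lemma evalAt_pwLinE (x : Ed d) (v : Fin N → Ed d) {t : ℝ} (ht : t ∈ Icc (0 : ℝ) 1) :
    evalAt (pwLinE x N v) t = x + ∑ k : Fin N, clamp01 (N * t - (k : ℕ)) • v k := by
  rw [evalAt, projIcc_of_mem _ ht]
  rfl

lemma sum_inner_evalAt_pwLinE (x : Ed d) (v : Fin N → Ed d) {τ : ι → ℝ}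
    (hτ : ∀ i, τ i ∈ Icc (0 : ℝ) 1) (ξ : ι → Ed d) :
    ∑ i, ⟪ξ i, evalAt (pwLinE x N v) (τ i)⟫
      = ⟪∑ i, ξ i, x⟫ + ∑ k : Fin N, ⟪incrementFreq τ ξ N k, v k⟫ := by
  simp_rw [incrementFreq, evalAt_pwLinE x v (hτ _), inner_add_right, Finset.sum_add_distrib,
    sum_inner, inner_sum, real_inner_smul_left, real_inner_smul_right]
  rw [Finset.sum_comm]

/-- The character `(t, ω) ↦ exp (i (s t + ∑ i, ξ i · ω (τ i)))` of `ℝ × Ω(x)`. -/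
def pathChar (s : ℝ) (τ : ι → ℝ) (ξ : ι → Ed d) (p : ℝ × Omega1 x) : ℂ :=
  Complex.exp (Complex.I * ((s * p.1 + ∑ i, ⟪ξ i, evalAt p.2.1 (τ i)⟫ : ℝ) : ℂ))

lemma continuous_pathChar (s : ℝ) (τ : ι → ℝ) (ξ : ι → Ed d) :
    Continuous (pathChar s τ ξ : ℝ × Omega1 x → ℂ) := by
  unfold pathChar evalAt
  fun_prop

lemma norm_pathChar (s : ℝ) (τ : ι → ℝ) (ξ : ι → Ed d) (p : ℝ × Omega1 x) :
    ‖pathChar s τ ξ p‖ = 1 := by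
  rw [pathChar, mul_comm, Complex.norm_exp_ofReal_mul_I]

lemma pathChar_pwLin1 {τ : ι → ℝ} (hτ : ∀ i, τ i ∈ Icc (0 : ℝ) 1) (s T : ℝ) (ξ : ι → Ed d)
    (v : Fin N → Ed d) :
    pathChar s τ ξ (T, pwLin1 x N v)
      = Complex.exp (Complex.I * (s * T + ⟪∑ i, ξ i, x⟫ : ℝ)) *
        ∏ k : Fin N, Complex.exp (Complex.I * (⟪incrementFreq τ ξ N k, v k⟫ : ℝ)) := by
  rw [← Complex.exp_sum, ← Finset.mul_sum, ← Complex.exp_add, ← mul_add, ← Complex.ofReal_sum,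
    ← Complex.ofReal_add, add_assoc, ← sum_inner_evalAt_pwLinE x v hτ ξ]
  rfl

end Paths

lemma map_withDensity_comp {α β : Type*} [MeasurableSpace α] [MeasurableSpace β]
    {μ : Measure α} {ν : Measure β} {g : α → β} (hg : MeasurePreserving g μ ν) {f : β → ℝ≥0∞}
    (hf : Measurable f) : (μ.withDensity (f ∘ g)).map g = ν.withDensity f := by
  ext s hs
  rw [Measure.map_apply hg.measurable hs, withDensity_apply _ (hg.measurable hs),
    withDensity_apply _ hs]
  exact hg.setLIntegral_comp_preimage hs hf

section WxaN

variable {d : ℕ} {x : Ed d} {a : ℝ}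

lemma measurable_prod_isotropicGaussianPDF (a : ℝ) (N : ℕ) :
    Measurable fun v : Fin N → Ed d => ∏ k, isotropicGaussianPDF a (v k) := by
  unfold isotropicGaussianPDF
  fun_prop

lemma measurable_prodMk_pwLin1 (x : Ed d) (T : ℝ) (N : ℕ) :
    Measurable fun v : Fin N → Ed d => (T, pwLin1 x N v) :=
  measurable_const.prodMk (continuous_pwLin1 x).measurable

lemma WxaN_eq_map (x : Ed d) (a : ℝ) (N : ℕ) :
    WxaN x a N = (volume.withDensity fun v : Fin N → Ed d =>
      ENNReal.ofReal (∏ k, isotropicGaussianPDF a (v k))).map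
        fun v => (a ^ 2 * N, pwLin1 x N v) := by
  have hincr := measurePreserving_increments (N := N) x
  rw [← map_withDensity_comp hincr (measurable_prod_isotropicGaussianPDF a N).ennreal_ofReal,
    Measure.map_map (measurable_prodMk_pwLin1 x _ N) hincr.measurable]
  simp only [WxaN, Function.comp_def, isotropicGaussianPDF, finrank_euclideanSpace_fin]
  rfl

lemma integral_WxaN {F : Type*} [NormedAddCommGroup F] [NormedSpace ℝ F] (x : Ed d) (a : ℝ) (N : ℕ)
    {f : ℝ × Omega1 x → F} (hf : StronglyMeasurable f) :
    ∫ p, f p ∂WxaN x a N = ∫ v : Fin N → Ed d,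
      (∏ k, isotropicGaussianPDF a (v k)) • f (a ^ 2 * N, pwLin1 x N v) := by
  rw [WxaN_eq_map, integral_map (measurable_prodMk_pwLin1 x _ N).aemeasurable
      hf.aestronglyMeasurable, integral_withDensity_eq_integral_toReal_smul
      (measurable_prod_isotropicGaussianPDF a N).ennreal_ofReal
      (ae_of_all _ fun _ => ENNReal.ofReal_lt_top)]
  simp_rw [ENNReal.toReal_ofReal
    (Finset.prod_nonneg fun _ _ => isotropicGaussianPDF_nonneg a (_ : Ed d))]

lemma integral_pathChar_WxaN {ι : Type*} [Fintype ι] (ha : a ≠ 0) {τ : ι → ℝ}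
    (hτ : ∀ i, τ i ∈ Icc (0 : ℝ) 1) (s : ℝ) (ξ : ι → Ed d) (N : ℕ) :
    ∫ p, pathChar s τ ξ p ∂WxaN x a N
      = Complex.exp (Complex.I * (s * (a ^ 2 * N) + ⟪∑ i, ξ i, x⟫ : ℝ)) *
        Real.exp (-(a ^ 2) * (walkVariance τ ξ N / 2)) := by
  rw [integral_WxaN x a N (continuous_pathChar s τ ξ).stronglyMeasurable]
  simp_rw [pathChar_pwLin1 hτ, Complex.real_smul, Complex.ofReal_prod,
    mul_left_comm (∏ _, (isotropicGaussianPDF a _ : ℂ)), ← Finset.prod_mul_distrib]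
  rw [integral_const_mul, integral_fintype_prod_volume_eq_prod fun (k : Fin N) v =>
    (isotropicGaussianPDF a v : ℂ) * Complex.exp (Complex.I * (⟪incrementFreq τ ξ N k, v⟫ : ℝ))]
  simp_rw [integral_isotropicGaussianPDF_mul_cexp_inner ha]
  rw [← Complex.ofReal_prod, ← Real.exp_sum, ← Finset.mul_sum, ← Finset.sum_div,
    Fin.sum_univ_eq_sum_range (fun k => ‖incrementFreq τ ξ N k‖ ^ 2), walkVariance]

lemma isProbabilityMeasure_WxaN (x : Ed d) (ha : a ≠ 0) (N : ℕ) :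
    IsProbabilityMeasure (WxaN x a N) := by
  have h := integral_pathChar_WxaN (x := x) ha (τ := Fin.elim0) (fun i => i.elim0) 0 Fin.elim0 N
  rw [isProbabilityMeasure_iff_real]
  simpa [pathChar, walkVariance, incrementFreq] using h

end WxaN

section Wxa

variable {d : ℕ} {x : Ed d} {m a : ℝ}

lemma integral_Wxa {F : Type*} [NormedAddCommGroup F] [NormedSpace ℝ F] (hm : m ≠ 0) (ha : a ≠ 0)
    {f : ℝ × Omega1 x → F} (hf : StronglyMeasurable f) {C : ℝ} (hC : ∀ p, ‖f p‖ ≤ C) :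
    ∫ p, f p ∂Wxa x m a = (1 - Real.exp (-m ^ 2 * a ^ 2 / 2)) •
      ∑' N : ℕ, Real.exp (-m ^ 2 * a ^ 2 * N / 2) • ∫ p, f p ∂WxaN x a N := by
  have hma : 0 < m ^ 2 * a ^ 2 / 2 := by positivity
  have weight_nonneg : 0 ≤ 1 - Real.exp (-m ^ 2 * a ^ 2 / 2) := by
    rw [sub_nonneg, Real.exp_le_one_iff]
    linarith
  have prob (N : ℕ) := isProbabilityMeasure_WxaN x ha N
  have hf_int (μ : Measure (ℝ × Omega1 x)) [IsFiniteMeasure μ] : Integrable f μ :=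
    .of_bound hf.aestronglyMeasurable C (ae_of_all _ hC)
  have hint : Integrable f (Measure.sum fun N : ℕ =>
      ENNReal.ofReal (Real.exp (-m ^ 2 * a ^ 2 * N / 2)) • WxaN x a N) := by
    refine integrable_sum_measure (fun N => (hf_int _).smul_measure ENNReal.ofReal_ne_top) ?_
    have summable_weights : Summable fun N : ℕ => Real.exp (-m ^ 2 * a ^ 2 * N / 2) :=
      (Real.summable_exp_nat_mul_iff.2 (neg_neg_of_pos hma)).congr fun N => by ring_nf
    refine (summable_weights.mul_right C).of_nonneg_of_le
      (fun N => integral_nonneg fun p => norm_nonneg _) fun N => ?_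
    rw [integral_smul_measure, ENNReal.toReal_ofReal (Real.exp_nonneg _), smul_eq_mul]
    refine mul_le_mul_of_nonneg_left ?_ (Real.exp_nonneg _)
    simpa using integral_mono (hf_int (WxaN x a N)).norm (integrable_const C) hC
  rw [Wxa, integral_smul_measure, integral_sum_measure hint, ENNReal.toReal_ofReal weight_nonneg]
  simp_rw [integral_smul_measure, ENNReal.toReal_ofReal (Real.exp_nonneg _)]

lemma re_sq_div_two_sub_I_mul (m s : ℝ) : (m ^ 2 / 2 - Complex.I * s : ℂ).re = m ^ 2 / 2 := by
  simp [← Complex.ofReal_pow]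

lemma integral_pathChar_Wxa {ι : Type*} [Fintype ι] (hm : m ≠ 0) (ha : a ≠ 0) {τ : ι → ℝ}
    (hτ : ∀ i, τ i ∈ Icc (0 : ℝ) 1) (s : ℝ) (ξ : ι → Ed d) :
    ∫ p, pathChar s τ ξ p ∂Wxa x m a
      = Complex.exp (Complex.I * (⟪∑ i, ξ i, x⟫ : ℝ)) *
        geometricAverage (m ^ 2 / 2 - Complex.I * s) (fun N => walkVariance τ ξ N / 2) (a ^ 2) := by
  have rate : -(m ^ 2 / 2 - Complex.I * s : ℂ).re * a ^ 2 = -m ^ 2 * a ^ 2 / 2 := by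
    rw [re_sq_div_two_sub_I_mul]
    ring
  rw [integral_Wxa hm ha (continuous_pathChar s τ ξ).stronglyMeasurable
    fun p => (norm_pathChar s τ ξ p).le, Complex.real_smul, geometricAverage, rate,
    mul_left_comm (Complex.exp _), ← tsum_mul_left (a := Complex.exp _)]
  congr 1
  refine tsum_congr fun N => ?_
  rw [integral_pathChar_WxaN ha hτ, Complex.real_smul, ← mul_assoc,
    ← mul_assoc (Complex.exp (Complex.I * _)), ← Complex.exp_nat_mul, Complex.ofReal_exp,
    ← Complex.exp_add, ← Complex.exp_add]
  congr 2
  push_cast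
  ring

end Wxa

lemma tendsto_sq_nhdsGT_zero : Tendsto (fun a : ℝ => a ^ 2) (𝓝[>] 0) (𝓝[>] 0) :=
  tendsto_nhdsWithin_of_tendsto_nhds_of_eventually_within _
    ((Continuous.tendsto' (by fun_prop) 0 0 (by simp)).mono_left nhdsWithin_le_nhds)
    (eventually_mem_nhdsWithin.mono fun _ ha => pow_pos (mem_Ioi.1 ha) 2)

theorem Wxa_char_tendsto_general {ι : Type*} [Fintype ι] {d : ℕ} {m : ℝ} (hm : m ≠ 0) (x : Ed d)
    {τ : ι → ℝ} (hτ : ∀ i, τ i ∈ Icc (0 : ℝ) 1) (s : ℝ) (ξ : ι → Ed d) :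
    Tendsto (fun a => ∫ p, pathChar s τ ξ p ∂Wxa x m a) (𝓝[>] 0)
      (𝓝 ((m ^ 2 / 2 : ℂ) * Complex.exp (Complex.I * (⟪∑ j, ξ j, x⟫ : ℝ)) *
        ∫ t in Ioi (0 : ℝ), Complex.exp ((Complex.I * s - m ^ 2 / 2) * t) *
          Real.exp (-(t / 2) * brownianVariance τ ξ))) := by
  set μ : ℂ := m ^ 2 / 2 - Complex.I * s with hμ
  have re_μ : μ.re = m ^ 2 / 2 := re_sq_div_two_sub_I_mul m s
  have variance_error (N : ℕ) : |walkVariance τ ξ N / 2 - N * (brownianVariance τ ξ / 2)|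
      ≤ (∑ i, ∑ j, |⟪ξ i, ξ j⟫|) / 2 := by
    rw [mul_div_assoc', ← sub_div, abs_div, abs_two]
    exact div_le_div_of_nonneg_right (abs_walkVariance_sub_le hτ ξ N) zero_le_two
  have hlim := ((tendsto_geometricAverage (by rw [re_μ]; positivity)
    (fun N => div_nonneg (walkVariance_nonneg τ ξ N) zero_le_two) variance_error).comp
      tendsto_sq_nhdsGT_zero).const_mul (Complex.exp (Complex.I * (⟪∑ j, ξ j, x⟫ : ℝ)))
  have integrand (t : ℝ) : Complex.exp ((Complex.I * s - m ^ 2 / 2) * t) *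
      Real.exp (-(t / 2) * brownianVariance τ ξ)
        = Complex.exp (-μ * t) * Real.exp (-t * (brownianVariance τ ξ / 2)) := by
    rw [hμ, neg_sub, neg_mul, neg_mul, div_mul_eq_mul_div, mul_div_assoc]
  have re_μ' : (m ^ 2 / 2 : ℂ) = μ.re := by rw [re_μ]; push_cast; rfl
  simp_rw [integrand]
  rw [re_μ', mul_comm (μ.re : ℂ), mul_assoc]
  refine hlim.congr' ?_
  filter_upwards [self_mem_nhdsWithin] with a (ha : 0 < a)
  exact (integral_pathChar_Wxa hm ha.ne' hτ s ξ).symm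

/-- Convergence of the characteristic functions of `W_{x,a}` as `a → 0⁺`:
for `0 = t_0 < t_1 < ⋯ < t_n ≤ 1`, `s ∈ ℝ`, `ξ_1, …, ξ_n ∈ ℝ^d` and
`η_i = ξ_i + ⋯ + ξ_n`,
`∫ exp(i(st + Σ ξ_i·ω(t_i))) dW_{x,a}(t,ω)` tends to
`(m²/2) e^{i x·η_1} ∫_0^∞ e^{(is - m²/2)t} exp(-(t/2) Σ (t_i - t_{i-1})|η_i|²) dt`. -/
theorem Wxa_char_tendsto (d : ℕ) (hd : 1 ≤ d) (m : ℝ) (hm : 0 < m) (x : Ed d)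
    (n : ℕ) (ts : ℕ → ℝ) (h0 : ts 0 = 0) (hmono : ∀ i < n, ts i < ts (i + 1))
    (hle : ts n ≤ 1) (s : ℝ) (ξ : Fin n → Ed d) :
    Tendsto
      (fun a : ℝ => ∫ p : ℝ × Omega1 x,
        Complex.exp (Complex.I *
          ((s * p.1 + ∑ i : Fin n, ⟪ξ i, evalAt p.2.1 (ts ((i : ℕ) + 1))⟫ : ℝ) : ℂ))
        ∂(Wxa x m a))
      (nhdsWithin 0 (Set.Ioi 0))
      (nhds ((m ^ 2 / 2 : ℂ) * Complex.exp (Complex.I * ((⟪∑ j, ξ j, x⟫ : ℝ) : ℂ)) *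
        ∫ t in Set.Ioi (0 : ℝ),
          Complex.exp ((Complex.I * s - m ^ 2 / 2) * t) *
            ((Real.exp (-(t / 2) * ∑ i : Fin n,
              (ts ((i : ℕ) + 1) - ts (i : ℕ)) * ‖∑ j ∈ Finset.Ici i, ξ j‖ ^ 2) : ℝ) : ℂ))) := by
  have hts : MonotoneOn ts (Iic n) := monotoneOn_of_le_add_one ordConnected_Iic
    fun i _ _ hi => (hmono i hi).le
  have hτ (i : Fin n) : ts (i + 1) ∈ Icc (0 : ℝ) 1 :=
    ⟨h0 ▸ hts n.zero_le i.2 (Nat.zero_le _), (hts i.2 self_mem_Iic i.2).trans hle⟩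
  simp_rw [sum_sub_mul_norm_sum_Ici_sq_eq_brownianVariance h0 hts]
  exact Wxa_char_tendsto_general hm.ne' x hτ s ξ

end
end

section
/- Fix an integer d ≥ 1, m > 0, times 0 < t_1 < … < t_n ≤ 1 (with t_0 = 0) and vectors η_1, …, η_n ∈ ℝ^d. For N ∈ ℕ set N_0 = 0 and N_i = ⌈t_i N⌉ for 1 ≤ i ≤ n. Then lim_{a→0⁺} (1 − e^{−m²a²/(2d)}) Σ_{N=0}^∞ e^{−m²a²N/(2d)} ∏_{i=1}^n ( (1/d) Σ_{ν=1}^d cos(a (η_i)_ν) )^{N_i − N_{i−1}} = (m²/2) ∫_0^∞ e^{−m²t/2} exp( −(t/2) Σ_{i=1}^n (t_i − t_{i−1}) |η_i|² ) dt. (Convergence of the characteristic functions of the hypercubic lattice path measures to those of the Wiener-type continuum measure.) -/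
open MeasureTheory Filter Topology Real Set

noncomputable section

/-! With `ε = a² / d` and `c = m² / 2`, the weight `(1 - e^{-cε}) e^{-cεN}` is the mass which the
exponential law of rate `c` gives to the cell `[Nε, (N + 1)ε)`. The lattice sum is therefore the
integral of `c e^{-ct}` against the product evaluated at `N = ⌊t / ε⌋`. All factors are bounded
by `1`, so dominated convergence reduces the claim to fixed `t`. There the `i`-th exponent is
asymptotic to `(t_i - t_{i-1}) t / ε`, and its base is `1 - ε |η_i|² / 2 + o(ε)`. -/

section GeometricSums

theorem stronglyMeasurable_comp_floor_div {E : Type*} [TopologicalSpace E] (f : ℕ → E) (b : ℝ) :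
    StronglyMeasurable fun t : ℝ => f ⌊t / b⌋₊ :=
  StronglyMeasurable.of_discrete.comp_measurable
    (Nat.measurable_floor.comp (measurable_id.div_const b))

variable {E : Type*} [NormedAddCommGroup E] [NormedSpace ℝ E]

theorem norm_exp_smul_le {C : ℝ} {v : E} (hv : ‖v‖ ≤ C) (x : ℝ) :
    ‖exp x • v‖ ≤ exp x * C := by
  rw [norm_smul, norm_of_nonneg (exp_pos x).le]
  exact mul_le_mul_of_nonneg_left hv (exp_pos x).le

theorem integrableOn_exp_smul_comp_floor_div {c C : ℝ} (hc : 0 < c) (b : ℝ) {f : ℕ → E}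
    (hf : ∀ N, ‖f N‖ ≤ C) :
    IntegrableOn (fun t => exp (-c * t) • f ⌊t / b⌋₊) (Ioi 0) := by
  refine ((exp_neg_integrableOn_Ioi 0 hc).mul_const C).mono' ?_
    (ae_of_all _ fun t => norm_exp_smul_le (hf _) _)
  exact (Continuous.stronglyMeasurable (by fun_prop)).smul
    (stronglyMeasurable_comp_floor_div f b) |>.aestronglyMeasurable

theorem floor_div_eq_of_mem_Ico {b t : ℝ} (hb : 0 < b) {N : ℕ}
    (ht : t ∈ Ico (N * b) ((N + 1 : ℕ) * b)) : ⌊t / b⌋₊ = N := by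
  have hN : (N : ℝ) ≤ t / b := (le_div_iff₀ hb).2 ht.1
  refine (Nat.floor_eq_iff (N.cast_nonneg.trans hN)).2 ⟨hN, (div_lt_iff₀ hb).2 ?_⟩
  exact_mod_cast ht.2

theorem iUnion_Ico_natCast_mul {b : ℝ} (hb : 0 < b) :
    ⋃ N : ℕ, Ico (N * b) ((N + 1 : ℕ) * b) = Ici 0 := by
  have hunbounded : Tendsto (fun N : ℕ => N * b) atTop atTop :=
    tendsto_natCast_atTop_atTop.atTop_mul_const hb
  simpa using iUnion_Ico_map_succ_eq_Ici (f := fun N : ℕ => N * b)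
    (fun N => by simpa using mul_nonneg N.cast_nonneg hb.le)
    (not_bddAbove_of_tendsto_atTop hunbounded)

theorem integral_exp_neg_mul_Ico {b c : ℝ} (hb : 0 ≤ b) (hc : c ≠ 0) (N : ℕ) :
    c * ∫ t in Ico (N * b) ((N + 1 : ℕ) * b), exp (-c * t) =
      (1 - exp (-c * b)) * exp (-c * b * N) := by
  have hle : N * b ≤ (N + 1 : ℕ) * b := by gcongr; simp
  have hleft : -c * (N * b) = -c * b * N := by ring
  have hright : -c * ((N + 1 : ℕ) * b) = -c * b * N + -c * b := by push_cast; ring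
  rw [integral_Ico_eq_integral_Ioc, ← intervalIntegral.integral_of_le hle,
    intervalIntegral.integral_comp_mul_left exp (neg_ne_zero.2 hc), integral_exp, hleft, hright,
    exp_add, smul_eq_mul]
  field_simp
  ring

variable [CompleteSpace E]

theorem one_sub_exp_smul_tsum_eq_integral {b c C : ℝ} (hb : 0 < b) (hc : 0 < c) {f : ℕ → E}
    (hf : ∀ N, ‖f N‖ ≤ C) :
    (1 - exp (-c * b)) • ∑' N : ℕ, exp (-c * b * N) • f N =
      c • ∫ t in Ioi 0, exp (-c * t) • f ⌊t / b⌋₊ := by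
  have hmono : Monotone fun N : ℕ => N * b := fun _ _ h => by dsimp only; gcongr
  have hdisjoint : Pairwise (Function.onFun Disjoint
      fun N : ℕ => Ico (N * b) ((N + 1 : ℕ) * b)) := hmono.pairwise_disjoint_on_Ico_succ
  have hint : IntegrableOn (fun t => exp (-c * t) • f ⌊t / b⌋₊)
      (⋃ N : ℕ, Ico (N * b) ((N + 1 : ℕ) * b)) := by
    rw [iUnion_Ico_natCast_mul hb, integrableOn_Ici_iff_integrableOn_Ioi]
    exact integrableOn_exp_smul_comp_floor_div hc b hf
  have hcell (N : ℕ) : ∫ t in Ico (N * b) ((N + 1 : ℕ) * b), exp (-c * t) • f ⌊t / b⌋₊ =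
      (∫ t in Ico (N * b) ((N + 1 : ℕ) * b), exp (-c * t)) • f N := by
    rw [← integral_smul_const]
    exact setIntegral_congr_fun measurableSet_Ico fun t ht => by
      simp only [floor_div_eq_of_mem_Ico hb ht]
  rw [← integral_Ici_eq_integral_Ioi, ← iUnion_Ico_natCast_mul hb,
    integral_iUnion (fun _ => measurableSet_Ico) hdisjoint hint,
    ← tsum_const_smul'', ← tsum_const_smul'']
  exact tsum_congr fun N => by
    rw [hcell, smul_smul, smul_smul, integral_exp_neg_mul_Ico hb.le hc.ne']

theorem tendsto_one_sub_exp_smul_tsum {α : Type*} {l : Filter α} [l.IsCountablyGenerated]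
    {ε : α → ℝ} {c C : ℝ} {f : α → ℕ → E} {F : ℝ → E} (hε : Tendsto ε l (𝓝[>] 0)) (hc : 0 < c)
    (hf : ∀ a N, ‖f a N‖ ≤ C)
    (hlim : ∀ t > 0, Tendsto (fun a => f a ⌊t / ε a⌋₊) l (𝓝 (F t))) :
    Tendsto (fun a => (1 - exp (-c * ε a)) • ∑' N : ℕ, exp (-c * ε a * N) • f a N) l
      (𝓝 (c • ∫ t in Ioi 0, exp (-c * t) • F t)) := by
  have hintegral : Tendsto (fun a => ∫ t in Ioi 0, exp (-c * t) • f a ⌊t / ε a⌋₊) l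
      (𝓝 (∫ t in Ioi 0, exp (-c * t) • F t)) := by
    refine tendsto_integral_filter_of_dominated_convergence (fun t => exp (-c * t) * C)
      (.of_forall fun a =>
        (integrableOn_exp_smul_comp_floor_div hc (ε a) (hf a)).aestronglyMeasurable)
      (.of_forall fun a => ae_of_all _ fun t => norm_exp_smul_le (hf a _) _)
      ((exp_neg_integrableOn_Ioi 0 hc).mul_const C) ?_
    filter_upwards [ae_restrict_mem measurableSet_Ioi] with t ht
    exact (hlim t ht).const_smul _
  refine (hintegral.const_smul c).congr' ?_
  filter_upwards [hε self_mem_nhdsWithin] with a ha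
  exact (one_sub_exp_smul_tsum_eq_integral ha hc (hf a)).symm

end GeometricSums

section PowerLimits

variable {α : Type*} {l : Filter α} {ε : α → ℝ}

theorem tendsto_rpow_exp_of_tendsto_mul_sub_one {u k : α → ℝ} {x : ℝ}
    (hu : Tendsto u l (𝓝 1)) (hk : Tendsto (fun a => k a * (u a - 1)) l (𝓝 x)) :
    Tendsto (fun a => u a ^ k a) l (𝓝 (exp x)) := by
  have hslope : Tendsto (fun a => dslope log 1 (u a)) l (𝓝 1) := by
    have h := (continuousAt_dslope_same.2 (differentiableAt_log one_ne_zero)).tendsto.comp hu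
    simpa [Function.comp_def] using h
  have hlog : Tendsto (fun a => log (u a) * k a) l (𝓝 x) := by
    refine mul_one x ▸ (hk.mul hslope).congr fun a => ?_
    have h := sub_smul_dslope log 1 (u a)
    rw [log_one, sub_zero, smul_eq_mul] at h
    rw [← h]
    ring
  refine ((continuous_exp.tendsto x).comp hlog).congr' ?_
  filter_upwards [hu.eventually (lt_mem_nhds one_pos)] with a ha
  exact (rpow_def_of_pos ha _).symm

theorem tendsto_ceil_mul_floor_div_mul (hε : Tendsto ε l (𝓝[>] 0)) {s t : ℝ} (hs : 0 ≤ s)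
    (ht : 0 < t) :
    Tendsto (fun a => (⌈s * ⌊t / ε a⌋₊⌉₊ : ℝ) * ε a) l (𝓝 (s * t)) := by
  have hdiv : Tendsto (fun a => t / ε a) l atTop :=
    (tendsto_inv_nhdsGT_zero.comp hε).const_mul_atTop ht
  have hfloor : Tendsto (fun a => (⌊t / ε a⌋₊ : ℝ)) l atTop :=
    tendsto_natCast_atTop_atTop.comp (tendsto_nat_floor_atTop.comp hdiv)
  have hratio := (((tendsto_nat_ceil_mul_div_atTop hs).comp hfloor).mul
    ((tendsto_nat_floor_div_atTop (R := ℝ)).comp hdiv)).mul_const t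
  rw [mul_one] at hratio
  refine hratio.congr' ?_
  filter_upwards [hfloor.eventually_gt_atTop 0, hε self_mem_nhdsWithin] with a ha hεa
  have hεa : ε a ≠ 0 := (mem_Ioi.1 hεa).ne'
  simp only [Function.comp_apply]
  field_simp

theorem tendsto_pow_ceil_sub_ceil (hε : Tendsto ε l (𝓝[>] 0)) {u : α → ℝ} {x : ℝ}
    (hu : Tendsto (fun a => (u a - 1) / ε a) l (𝓝 x)) {r s t : ℝ} (hr : 0 ≤ r) (hrs : r ≤ s)
    (ht : 0 < t) :
    Tendsto (fun a => u a ^ (⌈s * ⌊t / ε a⌋₊⌉₊ - ⌈r * ⌊t / ε a⌋₊⌉₊)) l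
      (𝓝 (exp ((s - r) * t * x))) := by
  have hε_ne : ∀ᶠ a in l, ε a ≠ 0 := by
    filter_upwards [hε self_mem_nhdsWithin] with a ha using (mem_Ioi.1 ha).ne'
  have hu_one : Tendsto u l (𝓝 1) := by
    have h := (hu.mul (hε.mono_right nhdsWithin_le_nhds)).add_const 1
    rw [mul_zero, zero_add] at h
    refine h.congr' ?_
    filter_upwards [hε_ne] with a ha
    rw [div_mul_cancel₀ _ ha, sub_add_cancel]
  have hexponent := (tendsto_ceil_mul_floor_div_mul hε (hr.trans hrs) ht).sub
    (tendsto_ceil_mul_floor_div_mul hε hr ht)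
  have hlimit := hexponent.mul hu
  rw [← sub_mul] at hlimit
  simp_rw [← rpow_natCast]
  refine tendsto_rpow_exp_of_tendsto_mul_sub_one hu_one (hlimit.congr' ?_)
  filter_upwards [hε_ne] with a ha
  rw [Nat.cast_sub (by gcongr)]
  field_simp

end PowerLimits

section SimpleRandomWalk

variable {ι : Type*} [Fintype ι]

/-- The characteristic function of a step of the simple random walk on `ℤ^ι`, which is uniformly
distributed on the vectors `± e_ν`; it is real because the law of the step is symmetric. -/
def simpleWalkCharFun (v : EuclideanSpace ℝ ι) : ℝ :=
  1 / (Fintype.card ι : ℝ) * ∑ ν, cos (v ν)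

theorem abs_simpleWalkCharFun_le_one (v : EuclideanSpace ℝ ι) : |simpleWalkCharFun v| ≤ 1 := by
  have hsum : |∑ ν, cos (v ν)| ≤ Fintype.card ι := by
    refine (Finset.abs_sum_le_sum_abs _ _).trans ?_
    simpa using Finset.sum_le_sum fun ν (_ : ν ∈ Finset.univ) => abs_cos_le_one (v ν)
  rw [simpleWalkCharFun, abs_mul, abs_of_nonneg (by positivity), one_div_mul_eq_div]
  exact div_le_one_of_le₀ hsum (Nat.cast_nonneg _)

theorem cos_sub_one_eq_neg_sq_mul_sinc_sq (x : ℝ) :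
    cos x - 1 = -(x ^ 2 / 2) * sinc (x / 2) ^ 2 := by
  rcases eq_or_ne x 0 with rfl | hx
  · simp
  · have hsin : sin (x / 2) ^ 2 = 1 / 2 - cos x / 2 := by
      rw [sin_sq_eq_half_sub, mul_div_cancel₀ x two_ne_zero]
    rw [sinc_of_ne_zero (by positivity), div_pow, hsin]
    field_simp
    ring

theorem tendsto_cos_mul_sub_one_div_sq (x : ℝ) :
    Tendsto (fun a => (cos (a * x) - 1) / a ^ 2) (𝓝[≠] 0) (𝓝 (-(x ^ 2 / 2))) := by
  have hcont : Continuous fun a => -(x ^ 2 / 2) * sinc (a * x / 2) ^ 2 :=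
    continuous_const.mul ((continuous_sinc.comp (by fun_prop)).pow 2)
  have hlim := (hcont.tendsto 0).mono_left (nhdsWithin_le_nhds (s := {0}ᶜ))
  simp only [zero_mul, zero_div, sinc_zero, one_pow, mul_one] at hlim
  refine hlim.congr' ?_
  filter_upwards [self_mem_nhdsWithin] with a (ha : a ≠ 0)
  rw [cos_sub_one_eq_neg_sq_mul_sinc_sq]
  field_simp

theorem tendsto_simpleWalkCharFun_smul_sub_one_div [Nonempty ι] (v : EuclideanSpace ℝ ι) :
    Tendsto (fun a : ℝ => (simpleWalkCharFun (a • v) - 1) / (a ^ 2 / Fintype.card ι)) (𝓝[≠] 0)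
      (𝓝 (-(‖v‖ ^ 2 / 2))) := by
  have hsum := tendsto_finsetSum Finset.univ fun ν _ => tendsto_cos_mul_sub_one_div_sq (v ν)
  rw [Finset.sum_neg_distrib, ← Finset.sum_div, ← EuclideanSpace.real_norm_sq_eq] at hsum
  refine hsum.congr fun a => ?_
  have hcard : (Fintype.card ι : ℝ) ≠ 0 := Nat.cast_ne_zero.2 Fintype.card_ne_zero
  have hmean : simpleWalkCharFun (a • v) - 1 =
      (∑ ν, (cos (a * v ν) - 1)) / Fintype.card ι := by
    simp only [simpleWalkCharFun, PiLp.smul_apply, smul_eq_mul, Finset.sum_sub_distrib,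
      Finset.sum_const, Finset.card_univ, nsmul_eq_mul, mul_one]
    field_simp
  rw [hmean, div_div_div_cancel_right₀ hcard, Finset.sum_div]

theorem tendsto_sq_div_nhdsGT_zero {b : ℝ} (hb : 0 < b) :
    Tendsto (fun a => a ^ 2 / b) (𝓝[>] 0) (𝓝[>] 0) := by
  have hcont : Continuous fun a => a ^ 2 / b := by fun_prop
  refine tendsto_nhdsWithin_iff.2 ⟨?_, ?_⟩
  · simpa using (hcont.tendsto 0).mono_left (nhdsWithin_le_nhds (s := Ioi 0))
  · filter_upwards [self_mem_nhdsWithin] with a (ha : 0 < a)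
    exact div_pos (pow_pos ha 2) hb

variable {κ : Type*} [Fintype κ]

/-- For disjoint intervals `(r i, s i]`, the joint characteristic function of the increments of
the simple random walk between the times `⌈r i * N⌉` and `⌈s i * N⌉`. The exponent is a truncated
subtraction, which is exact for `r i ≤ s i`. -/
def walkIncrementCharFun (r s : κ → ℝ) (η : κ → EuclideanSpace ℝ ι) (N : ℕ) : ℝ :=
  ∏ i, simpleWalkCharFun (η i) ^ (⌈s i * N⌉₊ - ⌈r i * N⌉₊)

theorem abs_walkIncrementCharFun_le_one (r s : κ → ℝ) (η : κ → EuclideanSpace ℝ ι) (N : ℕ) :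
    |walkIncrementCharFun r s η N| ≤ 1 := by
  rw [walkIncrementCharFun, Finset.abs_prod]
  refine Finset.prod_le_one (fun _ _ => abs_nonneg _) fun i _ => ?_
  rw [abs_pow]
  exact pow_le_one₀ (abs_nonneg _) (abs_simpleWalkCharFun_le_one _)

theorem tendsto_walkIncrementCharFun [Nonempty ι] {r s : κ → ℝ} (hr : ∀ i, 0 ≤ r i)
    (hrs : ∀ i, r i ≤ s i) (η : κ → EuclideanSpace ℝ ι) {t : ℝ} (ht : 0 < t) :
    Tendsto
      (fun a : ℝ => walkIncrementCharFun r s (fun i => a • η i) ⌊t / (a ^ 2 / Fintype.card ι)⌋₊)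
      (𝓝[>] 0) (𝓝 (exp (-(t / 2) * ∑ i, (s i - r i) * ‖η i‖ ^ 2))) := by
  rw [Finset.mul_sum, exp_sum]
  refine tendsto_finsetProd _ fun i _ => ?_
  have hlim := tendsto_pow_ceil_sub_ceil
    (tendsto_sq_div_nhdsGT_zero (Nat.cast_pos.2 Fintype.card_pos))
    ((tendsto_simpleWalkCharFun_smul_sub_one_div (η i)).mono_left (nhdsGT_le_nhdsNE 0))
    (hr i) (hrs i) ht
  have hexponent : -(t / 2) * ((s i - r i) * ‖η i‖ ^ 2) =
      (s i - r i) * t * -(‖η i‖ ^ 2 / 2) := by ring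
  rwa [hexponent]

theorem lattice_char_tendsto_general [Nonempty ι] {m : ℝ} (hm : 0 < m) {r s : κ → ℝ}
    (hr : ∀ i, 0 ≤ r i) (hrs : ∀ i, r i ≤ s i) (η : κ → EuclideanSpace ℝ ι) :
    Tendsto
      (fun a : ℝ => (1 - exp (-m ^ 2 * a ^ 2 / (2 * Fintype.card ι))) *
        ∑' N : ℕ, exp (-m ^ 2 * a ^ 2 * N / (2 * Fintype.card ι)) *
          walkIncrementCharFun r s (fun i => a • η i) N)
      (𝓝[>] 0)
      (𝓝 (m ^ 2 / 2 * ∫ t in Ioi (0 : ℝ), exp (-m ^ 2 * t / 2) *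
        exp (-(t / 2) * ∑ i, (s i - r i) * ‖η i‖ ^ 2))) := by
  have hlim := tendsto_one_sub_exp_smul_tsum
    (tendsto_sq_div_nhdsGT_zero (Nat.cast_pos.2 (Fintype.card_pos (α := ι))))
    (by positivity : 0 < m ^ 2 / 2) (fun _ => abs_walkIncrementCharFun_le_one r s _)
    fun _ => tendsto_walkIncrementCharFun hr hrs η
  have hrate (t : ℝ) : -m ^ 2 * t / 2 = -(m ^ 2 / 2) * t := by ring
  have hstep (a : ℝ) : -m ^ 2 * a ^ 2 / (2 * Fintype.card ι) =
      -(m ^ 2 / 2) * (a ^ 2 / Fintype.card ι) := by ring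
  have hsteps (a : ℝ) (N : ℕ) : -m ^ 2 * a ^ 2 * N / (2 * Fintype.card ι) =
      -(m ^ 2 / 2) * (a ^ 2 / Fintype.card ι) * N := by ring
  simpa only [hrate, hstep, hsteps, smul_eq_mul] using hlim

end SimpleRandomWalk

/-- **Convergence of the characteristic functions of the hypercubic lattice path
measures to those of the Wiener-type continuum measure.**
For `0 = t_0 < t_1 < ⋯ < t_n ≤ 1`, vectors `η_1, …, η_n ∈ ℝ^d` and
`N_i = ⌈t_i N⌉` (`N_0 = 0`),
`(1 - e^{-m²a²/(2d)}) Σ_{N=0}^∞ e^{-m²a²N/(2d)}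
  Π_{i=1}^n ((1/d) Σ_{ν=1}^d cos(a (η_i)_ν))^{N_i - N_{i-1}}`
tends, as `a → 0⁺`, to
`(m²/2) ∫_0^∞ e^{-m²t/2} exp(-(t/2) Σ_{i=1}^n (t_i - t_{i-1})|η_i|²) dt`. -/
theorem lattice_char_tendsto (d : ℕ) (hd : 1 ≤ d) (m : ℝ) (hm : 0 < m)
    (n : ℕ) (ts : ℕ → ℝ) (h0 : ts 0 = 0) (hmono : ∀ i < n, ts i < ts (i + 1))
    (hle : ts n ≤ 1) (η : Fin n → EuclideanSpace ℝ (Fin d)) :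
    Tendsto
      (fun a : ℝ =>
        (1 - Real.exp (-m ^ 2 * a ^ 2 / (2 * d))) *
          ∑' N : ℕ, Real.exp (-m ^ 2 * a ^ 2 * N / (2 * d)) *
            ∏ i : Fin n,
              ((1 / (d : ℝ)) * ∑ ν : Fin d, Real.cos (a * η i ν)) ^
                (Nat.ceil (ts ((i : ℕ) + 1) * N) - Nat.ceil (ts (i : ℕ) * N)))
      (nhdsWithin 0 (Set.Ioi 0))
      (nhds ((m ^ 2 / 2) *
        ∫ t in Set.Ioi (0 : ℝ), Real.exp (-m ^ 2 * t / 2) *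
          Real.exp (-(t / 2) *
            ∑ i : Fin n, (ts ((i : ℕ) + 1) - ts (i : ℕ)) * ‖η i‖ ^ 2))) := by
  have : NeZero d := ⟨Nat.one_le_iff_ne_zero.1 hd⟩
  have hts (i : Fin n) : 0 ≤ ts i :=
    h0 ▸ (strictMonoOn_Iic_of_lt_succ hmono).monotoneOn n.zero_le i.2.le i.1.zero_le
  simpa [walkIncrementCharFun, simpleWalkCharFun] using
    lattice_char_tendsto_general hm hts (fun i => (hmono i i.2).le) η

end
end

section
/- Fix an integer d ≥ 1 and x, y ∈ ℝ^d. The space Ω̄(x,y) of geometric (unparametrized) paths from x to y, with the metric induced by d̄, is a complete separable metric space. -/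
open MeasureTheory Filter Topology Real Set
open scoped RealInnerProductSpace ENNReal unitInterval

noncomputable section

/-- The reparametrization pseudo-distance
`d̄(ω,ω') = inf { d(ω, ω'∘φ) : φ an increasing homeomorphism of [0,1] }`. -/
def quotDist {d : ℕ} (ω ω' : PathSp d) : ℝ :=
  ⨅ φ : {φ : unitInterval ≃ₜ unitInterval // Monotone ⇑φ},
    dist ω (ω'.comp ⟨⇑φ.1, φ.1.continuous⟩)

open scoped Classical in
/-- The escape time `sup {t ∈ [t₀,1] : f([t₀,t]) ⊆ A}`, with the convention
`sup ∅ = 1`. -/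
def escTime {d : ℕ} (f : ℝ → Ed d) (A : Set (Ed d)) (t0 : ℝ) : ℝ :=
  if ({t | t ∈ Set.Icc t0 1 ∧ ∀ u ∈ Set.Icc t0 t, f u ∈ A}).Nonempty then
    sSup {t | t ∈ Set.Icc t0 1 ∧ ∀ u ∈ Set.Icc t0 t, f u ∈ A}
  else 1

/-- The sequence of successive escape times `τ_0 = 0`,
`τ_{i+1} = sup {t ≥ τ_i : f([τ_i,t]) ⊆ A_{i+1}}` (`A` being indexed from `0` here). -/
def tauSeq {d : ℕ} (f : ℝ → Ed d) (A : ℕ → Set (Ed d)) : ℕ → ℝ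
  | 0 => 0
  | i + 1 => escTime f (A i) (tauSeq f A i)

/-- The defining property of `Z(A_1,…,A_n)` for a parametrized path `ω`:
the successive escape times satisfy `τ_1 < τ_2 < ⋯ < τ_{n-1} < τ_n = 1`. -/
def ZcondPath {d : ℕ} {x y : Ed d} (ω : Omega2 x y) {n : ℕ}
    (A : Fin n → Set (Ed d)) : Prop :=
  (∀ i : ℕ, 1 ≤ i → i < n →
      tauSeq (evalAt ω.1) (fun j => if h : j < n then A ⟨j, h⟩ else ∅) i <
        tauSeq (evalAt ω.1) (fun j => if h : j < n then A ⟨j, h⟩ else ∅) (i + 1))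
    ∧ tauSeq (evalAt ω.1) (fun j => if h : j < n then A ⟨j, h⟩ else ∅) n = 1

/-- The set `Z(A_1,…,A_n)` of geometric (unparametrized) paths from `x` to `y`,
as a subset of the quotient space realized by `pr : Ω(x,y) → Q`. -/
def Zset {d : ℕ} {x y : Ed d} {Q : Type*} (pr : Omega2 x y → Q) {n : ℕ}
    (A : Fin n → Set (Ed d)) : Set Q :=
  {q | ∃ ω : Omega2 x y, pr ω = q ∧ ZcondPath ω A}

/-- A geometric path `q` is tangent to the boundary of `A` (at some point `z ∈ ∂A`)
if it has a parametrization `ω` with `ω(t₀) = z` and `ω(t) ∈ closure A` for all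
`0 < |t - t₀| < ε`, for some `ε > 0`. -/
def TangentAt {d : ℕ} {x y : Ed d} {Q : Type*} (pr : Omega2 x y → Q) (q : Q)
    (A : Set (Ed d)) : Prop :=
  ∃ ω : Omega2 x y, pr ω = q ∧ ∃ z ∈ frontier A, ∃ t0 : unitInterval,
    ω.1 t0 = z ∧ ∃ ε : ℝ, 0 < ε ∧ ∀ t : unitInterval,
      t ≠ t0 → |(t : ℝ) - (t0 : ℝ)| < ε → ω.1 t ∈ closure A


/-!
If `d̄(ω, ω') < r`, then some reparametrization of `ω'` lies within `r` of `ω`. Hence a step of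
length less than `r` in `Ω̄(x,y)` lifts to a step of length less than `r` in `Ω(x,y)` that starts at
any prescribed parametrization. A sequence with geometrically decaying steps thus lifts, one step
at a time, to a Cauchy sequence in the complete space `Ω(x,y)`, and the image of its limit is the
required limit. Separability passes to the image because the projection is `1`-Lipschitz.
-/

section UniformlyOpen

variable {X Y : Type*} [PseudoMetricSpace X] [PseudoMetricSpace Y] {f : X → Y}

theorem exists_seq_lift_dist_lt (hsurj : Function.Surjective f) {δ ε : ℕ → ℝ}
    (hlift : ∀ n x y, dist (f x) y < δ n → ∃ x', f x' = y ∧ dist x x' < ε n)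
    {u : ℕ → Y} (hu : ∀ n, dist (u n) (u (n + 1)) < δ n) :
    ∃ v : ℕ → X, (∀ n, f (v n) = u n) ∧ ∀ n, dist (v n) (v (n + 1)) < ε n := by
  have hnext (n : ℕ) (x : {x // f x = u n}) :
      ∃ x' : {x' // f x' = u (n + 1)}, dist x.1 x'.1 < ε n := by
    obtain ⟨x', hx', hlt⟩ := hlift n x.1 (u (n + 1)) (by rw [x.2]; exact hu n)
    exact ⟨⟨x', hx'⟩, hlt⟩
  choose next hnext using hnext
  obtain ⟨x₀, hx₀⟩ := hsurj (u 0)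
  let v : ∀ n, {x // f x = u n} := fun n => Nat.rec ⟨x₀, hx₀⟩ next n
  exact ⟨fun n => (v n).1, fun n => (v n).2, fun n => hnext n (v n)⟩

theorem completeSpace_of_surjective_of_uniformlyOpen [CompleteSpace X] (hcont : Continuous f)
    (hsurj : Function.Surjective f)
    (hopen : ∀ ε > 0, ∃ δ > 0, ∀ x y, dist (f x) y < δ → ∃ x', f x' = y ∧ dist x x' < ε) :
    CompleteSpace Y := by
  choose δ hδ hlift using fun n : ℕ => hopen ((1 / 2) ^ n) (by positivity)
  refine Metric.complete_of_convergent_controlled_sequences δ hδ fun u hu => ?_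
  obtain ⟨v, hfv, hv⟩ := exists_seq_lift_dist_lt hsurj hlift
    fun n => hu n n (n + 1) le_rfl n.le_succ
  have hcauchy : CauchySeq v :=
    cauchySeq_of_le_geometric (1 / 2) 1 (by norm_num) fun n => by simpa using (hv n).le
  obtain ⟨x, hx⟩ := cauchySeq_tendsto_of_complete hcauchy
  exact ⟨f x, ((hcont.tendsto x).comp hx).congr hfv⟩

end UniformlyOpen

section IInfDist

variable {ι X Y : Type*} [PseudoMetricSpace X] {T : ι → X → X} {f : X → Y}

theorem dist_le_of_dist_eq_iInf [PseudoMetricSpace Y]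
    (hf : ∀ x x', dist (f x) (f x') = ⨅ i, dist x (T i x')) (i : ι) (x x' : X) :
    dist (f x) (f x') ≤ dist x (T i x') :=
  (hf x x').trans_le (ciInf_le ⟨0, forall_mem_range.2 fun _ => dist_nonneg⟩ i)

theorem lipschitzWith_one_of_dist_eq_iInf [PseudoMetricSpace Y]
    (hf : ∀ x x', dist (f x) (f x') = ⨅ i, dist x (T i x')) (hid : ∃ i, T i = id) :
    LipschitzWith 1 f := by
  obtain ⟨i, hi⟩ := hid
  refine LipschitzWith.mk_one fun x x' => ?_
  simpa only [hi, id] using dist_le_of_dist_eq_iInf hf i x x'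

variable [MetricSpace Y]

theorem apply_eq_of_dist_eq_iInf (hf : ∀ x x', dist (f x) (f x') = ⨅ i, dist x (T i x'))
    (i : ι) (x : X) : f (T i x) = f x :=
  dist_le_zero.1 <| (dist_le_of_dist_eq_iInf hf i (T i x) x).trans_eq (dist_self _)

theorem exists_dist_lt_of_dist_eq_iInf [Nonempty ι] (hsurj : Function.Surjective f)
    (hf : ∀ x x', dist (f x) (f x') = ⨅ i, dist x (T i x')) {x : X} {y : Y} {r : ℝ}
    (hr : dist (f x) y < r) : ∃ x', f x' = y ∧ dist x x' < r := by
  obtain ⟨x', rfl⟩ := hsurj y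
  rw [hf] at hr
  obtain ⟨i, hi⟩ := exists_lt_of_ciInf_lt hr
  exact ⟨T i x', apply_eq_of_dist_eq_iInf hf i x', hi⟩

theorem completeSpace_of_dist_eq_iInf [CompleteSpace X] (hsurj : Function.Surjective f)
    (hf : ∀ x x', dist (f x) (f x') = ⨅ i, dist x (T i x')) (hid : ∃ i, T i = id) :
    CompleteSpace Y :=
  have : Nonempty ι := hid.nonempty
  completeSpace_of_surjective_of_uniformlyOpen
    (lipschitzWith_one_of_dist_eq_iInf hf hid).continuous hsurj
    fun ε hε => ⟨ε, hε, fun _ _ => exists_dist_lt_of_dist_eq_iInf hsurj hf⟩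

end IInfDist

theorem map_bot_of_monotone_of_surjective {α β : Type*} [Preorder α] [OrderBot α]
    [PartialOrder β] [OrderBot β] {f : α → β} (hmono : Monotone f)
    (hsurj : Function.Surjective f) : f ⊥ = ⊥ := by
  obtain ⟨a, ha⟩ := hsurj ⊥
  exact le_bot_iff.1 (ha ▸ hmono bot_le)

theorem map_top_of_monotone_of_surjective {α β : Type*} [Preorder α] [OrderTop α]
    [PartialOrder β] [OrderTop β] {f : α → β} (hmono : Monotone f)
    (hsurj : Function.Surjective f) : f ⊤ = ⊤ :=
  map_bot_of_monotone_of_surjective (α := αᵒᵈ) (β := βᵒᵈ) hmono.dual hsurj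

/-- The increasing homeomorphisms of `[0,1]`, i.e. the admissible changes of parameter. -/
abbrev IncreasingHomeo := {φ : I ≃ₜ I // Monotone φ}

/-- The paths from `x` to `y` in a space `E`. It is a subtype of `C(I, E)`, in order to carry the
uniform metric when `E` is a metric space, rather than Mathlib's `Path x y`, which is only given a
topology; for `E = ℝ^d` it is `Omega2 x y`. -/
abbrev PathsBetween {E : Type*} [TopologicalSpace E] (x y : E) :=
  {γ : C(I, E) // γ 0 = x ∧ γ 1 = y}

/-- The reparametrization pseudo-distance between paths in a (pseudo-)metric space `E`; for
`E = ℝ^d` it is `quotDist`. -/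
def reparamDist {E : Type*} [PseudoMetricSpace E] (γ γ' : C(I, E)) : ℝ :=
  ⨅ φ : IncreasingHomeo, dist γ (γ'.comp ⟨φ.1, φ.1.continuous⟩)

instance {E : Type*} [MetricSpace E] [CompleteSpace E] (x y : E) :
    CompleteSpace (PathsBetween x y) :=
  have hclosed : IsClosed {γ : C(I, E) | γ 0 = x ∧ γ 1 = y} :=
    (isClosed_eq (continuous_eval_const 0) continuous_const).inter
      (isClosed_eq (continuous_eval_const 1) continuous_const)
  hclosed.completeSpace_coe

namespace PathsBetween

variable {E : Type*} [TopologicalSpace E] {x y : E}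

/-- The reparametrization `γ ∘ φ` of a path `γ` by an increasing homeomorphism `φ` of `[0,1]`. -/
def reparam (φ : IncreasingHomeo) (γ : PathsBetween x y) : PathsBetween x y :=
  ⟨γ.1.comp ⟨φ.1, φ.1.continuous⟩,
    (congrArg γ.1 (map_bot_of_monotone_of_surjective φ.2 φ.1.surjective)).trans γ.2.1,
    (congrArg γ.1 (map_top_of_monotone_of_surjective φ.2 φ.1.surjective)).trans γ.2.2⟩

theorem exists_reparam_eq_id : ∃ φ, reparam φ = (id : PathsBetween x y → PathsBetween x y) :=
  ⟨⟨Homeomorph.refl I, monotone_id⟩, rfl⟩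

end PathsBetween

theorem geomPathSpace_complete_separable_general {E : Type*} [MetricSpace E] [CompleteSpace E]
    [TopologicalSpace.SeparableSpace E] {x y : E} {Q : Type*} [MetricSpace Q]
    {pr : PathsBetween x y → Q} (hsurj : Function.Surjective pr)
    (hdist : ∀ γ γ' : PathsBetween x y, dist (pr γ) (pr γ') = reparamDist γ.1 γ'.1) :
    CompleteSpace Q ∧ TopologicalSpace.SeparableSpace Q := by
  have : SecondCountableTopology E := UniformSpace.secondCountable_of_separable E
  have hreparam (γ γ' : PathsBetween x y) :
      dist (pr γ) (pr γ') = ⨅ φ, dist γ (PathsBetween.reparam φ γ') := hdist γ γ'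
  have hlip : LipschitzWith 1 pr :=
    lipschitzWith_one_of_dist_eq_iInf hreparam PathsBetween.exists_reparam_eq_id
  exact ⟨completeSpace_of_dist_eq_iInf hsurj hreparam PathsBetween.exists_reparam_eq_id,
    hsurj.denseRange.separableSpace hlip.continuous⟩

/-- `Ω̄(x,y)`, the space of geometric (unparametrized) paths from `x` to `y` with the
metric induced by the reparametrization pseudo-distance `d̄`, is a complete separable
metric space.  (Here `Ω̄(x,y)` is realized as any metric space `Q` with a surjection
`pr : Ω(x,y) → Q` inducing `d̄`.) -/
theorem geomPathSpace_complete_separable (d : ℕ) (hd : 1 ≤ d) (x y : Ed d)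
    (Q : Type) [MetricSpace Q] (pr : Omega2 x y → Q)
    (hsurj : Function.Surjective pr)
    (hdist : ∀ ω ω' : Omega2 x y, dist (pr ω) (pr ω') = quotDist ω.1 ω'.1) :
    CompleteSpace Q ∧ TopologicalSpace.SeparableSpace Q :=
  geomPathSpace_complete_separable_general hsurj hdist

end
end
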